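/- Let p ∈ (1, ∞), N ≥ 1, H ≥ 1. For every Φ-function Φ satisfying Φ ∈ (aInc)_p(∞) ∩ (aDec)(∞), there exist positive constants c, C, C₁, C₂, depending only on Φ and p, such that for every N-dimensional subspace X_N ⊂ C(Ω) with X_N ∈ NI_{2,∞}(H) and every m ≥ C·Φ(c·H^{2/min{p,2}})·(log 2N)²·log 2H², there is a set x = {x₁, …, x_m} ⊂ Ω of cardinality m such that C₁‖f‖_Φ ≤ ‖f‖_{Φ,x} ≤ C₂‖f‖_Φ for all f ∈ X_N. -/

import Mathlib

open MeasureTheory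

noncomputable section

/-- The sup-norm (uniform norm) `‖f‖_∞ = sup_{x ∈ Ω} |f x|` of a real-valued function. -/
def supNorm {Ω : Type*} (f : Ω → ℝ) : ℝ := ⨆ x, |f x|

/-- The Luxemburg functional `‖f‖_Φ = inf {λ > 0 : ∫ Φ(|f|/λ) dμ ≤ 1}`. -/
def luxNorm {Ω : Type*} [MeasurableSpace Ω] (μ : Measure Ω) (Φ : ℝ → ℝ) (f : Ω → ℝ) : ℝ :=
  sInf {lam : ℝ | 0 < lam ∧ ∫ x, Φ (|f x| / lam) ∂μ ≤ 1}

/-- The discrete Luxemburg functional `‖f‖_{Φ,x}` with respect to the uniform discrete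
probability measure `(1/m) ∑_{j=1}^m δ_{x_j}`. -/
def discLuxNorm {Ω : Type*} (Φ : ℝ → ℝ) {m : ℕ} (x : Fin m → Ω) (f : Ω → ℝ) : ℝ :=
  sInf {lam : ℝ | 0 < lam ∧ (∑ j, Φ (|f (x j)| / lam)) / (m : ℝ) ≤ 1}

/-- The weighted discrete Luxemburg functional `‖f‖_{Φ,x,λ}` with respect to the discrete
probability measure `∑_{j=1}^m λ_j δ_{x_j}`. -/
def wDiscLuxNorm {Ω : Type*} (Φ : ℝ → ℝ) {m : ℕ} (x : Fin m → Ω) (w : Fin m → ℝ)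
    (f : Ω → ℝ) : ℝ :=
  sInf {lam : ℝ | 0 < lam ∧ (∑ j, w j * Φ (|f (x j)| / lam)) ≤ 1}

/-- `Φ : [0,∞) → [0,∞)` is a Φ-prefunction: increasing, `Φ(0) = 0`, `Φ(0+) = 0`,
`Φ(∞) = ∞` (stated for a function on `ℝ`, with the relevant conditions on `[0,∞)`). -/
structure IsPhiPrefun (Φ : ℝ → ℝ) : Prop where
  mono : MonotoneOn Φ (Set.Ici 0)
  map_zero : Φ 0 = 0
  nonneg : ∀ t : ℝ, 0 ≤ t → 0 ≤ Φ t
  tendsto_zero : Filter.Tendsto Φ (nhdsWithin 0 (Set.Ioi 0)) (nhds 0)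
  tendsto_atTop : Filter.Tendsto Φ Filter.atTop Filter.atTop

/-- `Φ ∈ (aInc)_p` with constant `a`: `t ↦ Φ(t) t^{-p}` is almost increasing on `(0,∞)`. -/
def AIncP (Φ : ℝ → ℝ) (p a : ℝ) : Prop :=
  ∀ s t : ℝ, 0 < s → s < t → Φ s / s ^ p ≤ a * (Φ t / t ^ p)

/-- `Φ ∈ (Inc)_p` : `t ↦ Φ(t) t^{-p}` is increasing on `(0,∞)`. -/
def IncP (Φ : ℝ → ℝ) (p : ℝ) : Prop :=
  ∀ s t : ℝ, 0 < s → s < t → Φ s / s ^ p ≤ Φ t / t ^ p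

/-- `Φ ∈ (Dec)_q` : `t ↦ Φ(t) t^{-q}` is decreasing on `(0,∞)`. -/
def DecQ (Φ : ℝ → ℝ) (q : ℝ) : Prop :=
  ∀ s t : ℝ, 0 < s → s < t → Φ t / t ^ q ≤ Φ s / s ^ q

/-- `Φ ∈ (aDec)_q` with constant `b`: `t ↦ Φ(t) t^{-q}` is almost decreasing on `(0,∞)`. -/
def ADecQ (Φ : ℝ → ℝ) (q b : ℝ) : Prop :=
  ∀ s t : ℝ, 0 < s → s < t → Φ t / t ^ q ≤ b * (Φ s / s ^ q)

/-- `t ↦ Φ(t) t^{-p}` is almost increasing with constant `a` on `(t_*, ∞)`. -/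
def AIncPOn (Φ : ℝ → ℝ) (p a tstar : ℝ) : Prop :=
  ∀ s t : ℝ, tstar < s → s < t → Φ s / s ^ p ≤ a * (Φ t / t ^ p)

/-- `t ↦ Φ(t) t^{-q}` is almost decreasing with constant `b` on `(t_*, ∞)`. -/
def ADecQOn (Φ : ℝ → ℝ) (q b tstar : ℝ) : Prop :=
  ∀ s t : ℝ, tstar < s → s < t → Φ t / t ^ q ≤ b * (Φ s / s ^ q)

/-- Entropy numbers `e_n(F, d)` of a set `F` with respect to a distance-like function `dd`:
the infimum of `ε > 0` such that `F` can be covered by `2^{2^n}` (one, for `n = 0`)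
`ε`-balls centered in `F`. -/
def entropyNumD {X : Type*} (dd : X → X → ℝ) (F : Set X) (n : ℕ) : ℝ :=
  sInf {ε : ℝ | 0 < ε ∧ ∃ T : Finset X, ↑T ⊆ F ∧
    T.card ≤ (if n = 0 then 1 else 2 ^ 2 ^ n) ∧ ∀ f ∈ F, ∃ g ∈ T, dd f g < ε}

/-- Sampling numbers `ϱ_m(F, ‖·‖)`: recovery by linear methods from samples at `m` points. -/
def sampNum {Ω : Type*} (nrm : (Ω → ℝ) → ℝ) (F : Set (Ω → ℝ)) (m : ℕ) : ℝ :=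
  sInf {r : ℝ | ∃ (x : Fin m → Ω) (T : (Fin m → ℝ) →ₗ[ℝ] (Ω → ℝ)),
    r = ⨆ f ∈ F, nrm (fun y => f y - T (fun j => f (x j)) y)}

/-- Modified sampling numbers `ϱ*_m(F, ‖·‖)`: recovery by arbitrary methods mapping into a
subspace of dimension at most `m`, from samples at `m` points. -/
def sampNumStar {Ω : Type*} (nrm : (Ω → ℝ) → ℝ) (F : Set (Ω → ℝ)) (m : ℕ) : ℝ :=
  sInf {r : ℝ | ∃ (x : Fin m → Ω) (Y : Submodule ℝ (Ω → ℝ)), Module.finrank ℝ Y ≤ m ∧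
    ∃ T : (Fin m → ℝ) → Ω → ℝ, (∀ v, T v ∈ Y) ∧
    r = ⨆ f ∈ F, nrm (fun y => f y - T (fun j => f (x j)) y)}

/-- Kolmogorov width `d_N(F, ‖·‖_∞)` : infimum over `N`-dimensional subspaces of `C(Ω)` of the
worst-case best approximation error in the uniform norm. -/
def kolWidth {Ω : Type*} [TopologicalSpace Ω] (F : Set (Ω → ℝ)) (N : ℕ) : ℝ :=
  sInf {r : ℝ | ∃ X : Submodule ℝ (Ω → ℝ), Module.finrank ℝ X = N ∧
    (∀ u ∈ X, Continuous u) ∧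
    r = ⨆ f ∈ F, sInf ((fun u => supNorm (fun y => f y - u y)) '' (X : Set (Ω → ℝ)))}

end
open MeasureTheory

def sgnB (b : Bool) : ℝ := if b then 1 else -1

theorem sum_exp_signs {ι : Type*} [Fintype ι] [DecidableEq ι] (a : ι → ℝ) :
    ∑ e : ι → Bool, Real.exp (∑ i, sgnB (e i) * a i) ≤
      2 ^ Fintype.card ι * Real.exp ((∑ i, a i ^ 2) / 2) := by
  have h1 : ∑ e : ι → Bool, Real.exp (∑ i, sgnB (e i) * a i)
      = ∏ i, ∑ b : Bool, Real.exp (sgnB b * a i) := by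
    rw [Fintype.prod_sum]
    exact Finset.sum_congr rfl fun e _ => Real.exp_sum _ _
  rw [h1]
  calc ∏ i, ∑ b : Bool, Real.exp (sgnB b * a i)
      ≤ ∏ i, (2 * Real.exp (a i ^ 2 / 2)) := by
        apply Finset.prod_le_prod
        · intro i _; positivity
        · intro i _
          have := Real.cosh_le_exp_half_sq (a i)
          rw [Real.cosh_eq] at this
          simp [sgnB]
          linarith
    _ = _ := by
        rw [Finset.prod_mul_distrib, ← Real.exp_sum, Finset.sum_div]
        simp

theorem hoeff_one {ι : Type*} [Fintype ι] [DecidableEq ι] (a : ι → ℝ) (σ u : ℝ)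
    (hσ : 0 < σ) (hu : 0 ≤ u) (ha : ∑ i, a i ^ 2 ≤ σ) :
    ((Finset.univ.filter fun e : ι → Bool =>
      Real.sqrt (2 * σ * u) < ∑ i, sgnB (e i) * a i).card : ℝ) ≤
      2 ^ Fintype.card ι * Real.exp (-u) := by
  set lam := Real.sqrt (2 * u / σ) with hlam
  have hl2 : lam ^ 2 = 2 * u / σ := Real.sq_sqrt (by positivity)
  have hls : lam * Real.sqrt (2 * σ * u) = 2 * u := by
    rw [hlam, ← Real.sqrt_mul (by positivity)]
    rw [show 2 * u / σ * (2 * σ * u) = (2 * u) ^ 2 by field_simp]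
    exact Real.sqrt_sq (by positivity)
  have h0 : 0 ≤ lam := Real.sqrt_nonneg _
  have key := sum_exp_signs (fun i => lam * a i)
  have h2 : (∑ i, (lam * a i) ^ 2) / 2 ≤ u := by
    simp_rw [mul_pow]
    rw [← Finset.mul_sum, hl2]
    have : 2 * u / σ * ∑ i, a i ^ 2 ≤ 2 * u / σ * σ := by gcongr
    rw [div_mul_cancel₀ _ hσ.ne'] at this
    linarith
  have h3 : ((Finset.univ.filter fun e : ι → Bool =>
      Real.sqrt (2 * σ * u) < ∑ i, sgnB (e i) * a i).card : ℝ) * Real.exp (2 * u) ≤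
      ∑ e : ι → Bool, Real.exp (∑ i, sgnB (e i) * (lam * a i)) := by
    rw [← nsmul_eq_mul]
    refine le_trans (Finset.card_nsmul_le_sum _ (fun e : ι → Bool => Real.exp (∑ i, sgnB (e i) * (lam * a i))) _ ?_) ?_
    · intro e he
      rw [Finset.mem_filter] at he
      apply Real.exp_le_exp.2
      rw [← hls]
      have : ∑ i, sgnB (e i) * (lam * a i) = lam * ∑ i, sgnB (e i) * a i := by
        rw [Finset.mul_sum]; exact Finset.sum_congr rfl fun i _ => by ring
      rw [this]
      exact mul_le_mul_of_nonneg_left he.2.le h0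
    · apply Finset.sum_le_sum_of_subset_of_nonneg (Finset.filter_subset _ _)
      intros; positivity
  have h4 : ((Finset.univ.filter fun e : ι → Bool =>
      Real.sqrt (2 * σ * u) < ∑ i, sgnB (e i) * a i).card : ℝ) * Real.exp (2 * u) ≤
      (2 ^ Fintype.card ι * Real.exp (-u)) * Real.exp (2 * u) := by
    rw [mul_assoc (2 ^ Fintype.card ι : ℝ), ← Real.exp_add]
    refine h3.trans (key.trans ?_)
    gcongr
    linarith
  exact le_of_mul_le_mul_right h4 (Real.exp_pos _)

theorem hoeff {ι : Type*} [Fintype ι] [DecidableEq ι] (a : ι → ℝ) (σ u : ℝ)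
    (hσ : 0 < σ) (hu : 0 ≤ u) (ha : ∑ i, a i ^ 2 ≤ σ) :
    ((Finset.univ.filter fun e : ι → Bool =>
      Real.sqrt (2 * σ * u) < |∑ i, sgnB (e i) * a i|).card : ℝ) ≤
      2 ^ Fintype.card ι * (2 * Real.exp (-u)) := by
  have h1 := hoeff_one a σ u hσ hu ha
  have h2 := hoeff_one (fun i => - a i) σ u hσ hu (by simpa using ha)
  have hsub : (Finset.univ.filter fun e : ι → Bool =>
      Real.sqrt (2 * σ * u) < |∑ i, sgnB (e i) * a i|) ⊆
      (Finset.univ.filter fun e : ι → Bool =>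
      Real.sqrt (2 * σ * u) < ∑ i, sgnB (e i) * a i) ∪
      (Finset.univ.filter fun e : ι → Bool =>
      Real.sqrt (2 * σ * u) < ∑ i, sgnB (e i) * (- a i)) := by
    intro e he
    simp only [Finset.mem_filter, Finset.mem_univ, true_and, Finset.mem_union, lt_abs, mul_neg,
      Finset.sum_neg_distrib] at he ⊢
    exact he
  have h3 := (Finset.card_le_card hsub).trans (Finset.card_union_le _ _)
  have h4 := (Nat.cast_le (α := ℝ)).2 h3
  push_cast at h4
  linarith

/-- Perceptron covering lemma. -/
theorem perceptron {ι : Type*} [Fintype ι] {E : Type*} [NormedAddCommGroup E]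
    [InnerProductSpace ℝ E] (κ : ι → E) (H ε : ℝ) (hH : 0 < H) (hε : 0 < ε)
    (hκ : ∀ j, ‖κ j‖ ≤ H) (T : ℕ) :
    ∃ S : Finset E, S.card ≤ (2 * Fintype.card ι + 1) ^ T ∧ S.Nonempty ∧
      ∀ h : E, ‖h‖ ^ 2 * H ^ 2 ≤ T * ε ^ 2 → ∃ g ∈ S, ∀ j, |inner ℝ (h - g) (κ j)| ≤ ε := by
  classical
  induction T with
  | zero =>
    refine ⟨{0}, by simp, by simp, fun h hh => ⟨0, by simp, fun j => ?_⟩⟩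
    have : ‖h‖ = 0 := by
      have h1 : ‖h‖ ^ 2 * H ^ 2 ≤ 0 := by simpa using hh
      have h2 : ‖h‖ ^ 2 ≤ 0 := by
        by_contra hc
        push Not at hc
        have : 0 < ‖h‖ ^ 2 * H ^ 2 := by positivity
        linarith
      nlinarith [norm_nonneg h]
    rw [norm_eq_zero] at this
    simp [this, hε.le]
  | succ T ih =>
    obtain ⟨S, hS, hne, hc⟩ := ih
    set η := ε / H ^ 2 with hη
    let F : Option (ι × Bool) × E → E := fun q => match q.1 with
      | none => 0
      | some (j, b) => q.2 + (sgnB b * η) • κ j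
    refine ⟨((Finset.univ : Finset (Option (ι × Bool))) ×ˢ S).image F, ?_, ?_, ?_⟩
    · refine Finset.card_image_le.trans ?_
      rw [Finset.card_product, pow_succ, mul_comm]
      refine Nat.mul_le_mul hS ?_
      simp; omega
    · obtain ⟨s, hs⟩ := hne
      exact ⟨F (none, s), Finset.mem_image_of_mem _ (by simp [hs])⟩
    · intro h hh
      by_cases hcase : ∀ j, |inner ℝ h (κ j)| ≤ ε
      · obtain ⟨s, hs⟩ := hne
        refine ⟨F (none, s), Finset.mem_image_of_mem _ (by simp [hs]), ?_⟩
        simpa [F] using hcase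
      · push Not at hcase
        obtain ⟨j, hj⟩ := hcase
        obtain ⟨b, hb⟩ : ∃ b : Bool, ε < sgnB b * inner ℝ h (κ j) := by
          rcases lt_abs.1 hj with h1 | h1
          · exact ⟨true, by simpa [sgnB] using h1⟩
          · exact ⟨false, by simpa [sgnB] using h1⟩
        have hb2 : sgnB b ^ 2 = 1 := by cases b <;> simp [sgnB]
        have hη0 : 0 < η := by positivity
        have hn : ‖h - (sgnB b * η) • κ j‖ ^ 2 ≤ ‖h‖ ^ 2 - ε ^ 2 / H ^ 2 := by
          rw [norm_sub_sq_real, inner_smul_right, norm_smul, mul_pow, Real.norm_eq_abs, sq_abs,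
            mul_pow, hb2, one_mul]
          have h1 : η ^ 2 * ‖κ j‖ ^ 2 ≤ η ^ 2 * H ^ 2 := by
            gcongr; exact hκ j
          have h2 : η ^ 2 * H ^ 2 = ε ^ 2 / H ^ 2 := by rw [hη]; field_simp
          have h3 : η * ε ≤ η * (sgnB b * inner ℝ h (κ j)) := by gcongr
          have h4 : η * ε = ε ^ 2 / H ^ 2 := by rw [hη]; field_simp
          nlinarith
        obtain ⟨g, hg, hgj⟩ := hc (h - (sgnB b * η) • κ j) (by
          have : ‖h - (sgnB b * η) • κ j‖ ^ 2 * H ^ 2 ≤ (‖h‖ ^ 2 - ε ^ 2 / H ^ 2) * H ^ 2 := by gcongr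
          have h5 : (‖h‖ ^ 2 - ε ^ 2 / H ^ 2) * H ^ 2 = ‖h‖ ^ 2 * H ^ 2 - ε ^ 2 := by field_simp
          push_cast at hh
          linarith)
        refine ⟨F (some (j, b), g), Finset.mem_image_of_mem _ (by simp [hg]), fun i => ?_⟩
        have := hgj i
        simp only [F]
        rwa [sub_sub, add_comm] at this

open MeasureTheory

theorem vol_one {W : Type*} [NormedAddCommGroup W] [NormedSpace ℝ W] [FiniteDimensional ℝ W] :
    ∃ S : Finset W, S.card ≤ 5 ^ Module.finrank ℝ W ∧
      ∀ h : W, ‖h‖ ≤ 2 → ∃ g ∈ S, ‖h - g‖ ≤ 1 := by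
  classical
  let Q : ℕ → Prop := fun c => ∃ s : Finset W, s.card = c ∧ (∀ x ∈ s, ‖x‖ ≤ 2) ∧
    (∀ x ∈ s, ∀ y ∈ s, x ≠ y → 1 ≤ ‖x - y‖)
  have hQ0 : Q 0 := ⟨∅, by simp⟩
  obtain ⟨s, hs, hs2, hsep⟩ : Q (Nat.findGreatest Q (5 ^ Module.finrank ℝ W)) :=
    Nat.findGreatest_spec (Nat.zero_le _) hQ0
  refine ⟨s, Besicovitch.card_le_of_separated s hs2 hsep, ?_⟩
  intro h hh
  by_contra hc
  push Not at hc
  have hns : h ∉ s := fun hmem => by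
    have := hc h hmem
    simp at this
    linarith
  have hQ : Q (s.card + 1) := by
    refine ⟨insert h s, Finset.card_insert_of_notMem hns, ?_, ?_⟩
    · intro x hx
      rcases Finset.mem_insert.1 hx with rfl | hx
      · exact hh
      · exact hs2 x hx
    · intro x hx y hy hxy
      rcases Finset.mem_insert.1 hx with hx1 | hx1 <;>
        rcases Finset.mem_insert.1 hy with hy1 | hy1
      · exact absurd (hx1.trans hy1.symm) hxy
      · rw [hx1]; exact (hc y hy1).le
      · rw [norm_sub_rev, hy1]; exact (hc x hx1).le
      · exact hsep x hx1 y hy1 hxy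
  have hb : s.card + 1 ≤ 5 ^ Module.finrank ℝ W := by
    obtain ⟨s', h1, h2, h3⟩ := hQ
    rw [← h1]
    exact Besicovitch.card_le_of_separated s' h2 h3
  have := Nat.le_findGreatest hb hQ
  omega

theorem vol_two {ι : Type*} [Fintype ι] {E : Type*} [NormedAddCommGroup E]
    [InnerProductSpace ℝ E] [FiniteDimensional ℝ E] (κ : ι → E) (N : ℕ)
    (hN : Module.finrank ℝ E ≤ N) (ε : ℝ) (hε : 0 < ε) :
    ∃ S : Finset E, S.card ≤ 5 ^ N ∧
      ∀ h : E, (∀ j, |inner ℝ h (κ j)| ≤ 2 * ε) → ∃ g ∈ S, ∀ j, |inner ℝ (h - g) (κ j)| ≤ ε := by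
  classical
  let f : E →ₗ[ℝ] (ι → ℝ) := LinearMap.pi fun j => (innerₗ E).flip (κ j)
  have hf : ∀ h j, f h j = inner ℝ h (κ j) := fun h j => rfl
  obtain ⟨S, hS, hc⟩ := vol_one (W := LinearMap.range f)
  have hex : ∀ w : LinearMap.range f, ∃ g : E, f g = w := fun w => w.2
  choose r hr using hex
  refine ⟨S.image fun w => ε • r w, ?_, ?_⟩
  · refine Finset.card_image_le.trans (hS.trans (Nat.pow_le_pow_right (by norm_num) ?_))
    exact (LinearMap.finrank_range_le f).trans hN
  · intro h hh
    have h1 : ‖(⟨f (ε⁻¹ • h), LinearMap.mem_range_self f _⟩ : LinearMap.range f)‖ ≤ 2 := by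
      rw [Submodule.coe_norm, pi_norm_le_iff_of_nonneg (by norm_num)]
      intro j
      simp only [hf, inner_smul_left, conj_trivial, Real.norm_eq_abs, abs_mul, abs_inv,
        abs_of_pos hε]
      rw [inv_mul_le_iff₀ hε]
      linarith [hh j]
    obtain ⟨g, hg, hgc⟩ := hc _ h1
    refine ⟨ε • r g, Finset.mem_image_of_mem _ hg, fun j => ?_⟩
    rw [Submodule.coe_norm, pi_norm_le_iff_of_nonneg (by norm_num)] at hgc
    have := hgc j
    simp only [Submodule.coe_sub, ← hr g, ← map_sub, hf, Real.norm_eq_abs] at this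
    have h2 : h - ε • r g = ε • (ε⁻¹ • h - r g) := by
      rw [smul_sub, smul_smul, mul_inv_cancel₀ hε.ne', one_smul]
    rw [h2, inner_smul_left]
    simp only [conj_trivial, abs_mul, abs_of_pos hε]
    nlinarith

theorem vol_three {ι : Type*} [Fintype ι] {E : Type*} [NormedAddCommGroup E]
    [InnerProductSpace ℝ E] [FiniteDimensional ℝ E] (κ : ι → E) (N : ℕ)
    (hN : Module.finrank ℝ E ≤ N) (ε : ℝ) (hε : 0 < ε) :
    ∃ S : Finset E, S.card ≤ 25 ^ N ∧
      ∀ h : E, (∀ j, |inner ℝ h (κ j)| ≤ 4 * ε) → ∃ g ∈ S, ∀ j, |inner ℝ (h - g) (κ j)| ≤ ε := by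
  classical
  obtain ⟨S, hS, hc⟩ := vol_two κ N hN ε hε
  obtain ⟨S', hS', hc'⟩ := vol_two κ N hN (2 * ε) (by positivity)
  refine ⟨(S ×ˢ S').image fun q => q.2 + q.1, ?_, ?_⟩
  · refine Finset.card_image_le.trans ?_
    rw [Finset.card_product, show (25 : ℕ) = 5 * 5 by norm_num, mul_pow]
    exact Nat.mul_le_mul hS hS'
  · intro h hh
    obtain ⟨g, hg, hgc⟩ := hc' h (fun j => by linarith [hh j])
    obtain ⟨g', hg', hgc'⟩ := hc (h - g) hgc
    refine ⟨g + g', Finset.mem_image.2 ⟨(g', g), by simp [hg, hg'], rfl⟩, fun j => ?_⟩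
    rw [← sub_sub]; exact hgc' j

def IsCov {ι : Type*} {E : Type*} [NormedAddCommGroup E]
    [InnerProductSpace ℝ E] (κ : ι → E) (B : Set E) (P : Finset E) (ε : ℝ) : Prop :=
  (∀ w ∈ P, w ∈ B) ∧ ∀ v ∈ B, ∃ w ∈ P, ∀ j, |inner ℝ (v - w) (κ j)| ≤ ε

theorem cov_refine {ι : Type*} {E : Type*} [NormedAddCommGroup E]
    [InnerProductSpace ℝ E] (κ : ι → E) (B : Set E) (P : Finset E) (ε : ℝ)
    (hP : IsCov κ B P ε) (S : Finset E)
    (hS : ∀ v ∈ B, ∀ w ∈ B, (∀ j, |inner ℝ (v - w) (κ j)| ≤ ε) →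
      ∃ g ∈ S, ∀ j, |inner ℝ (v - w - g) (κ j)| ≤ ε / 4) :
    ∃ P' : Finset E, IsCov κ B P' (ε / 2) ∧ P'.card ≤ P.card * S.card := by
  classical
  let good : E × E → Prop := fun q => ∃ v ∈ B, ∀ j, |inner ℝ (v - q.1 - q.2) (κ j)| ≤ ε / 4
  let rep : E × E → E := fun q => if h : good q then h.choose else 0
  refine ⟨((P ×ˢ S).filter good).image rep, ⟨?_, ?_⟩, ?_⟩
  · intro w hw
    obtain ⟨q, hq, rfl⟩ := Finset.mem_image.1 hw
    have hg := (Finset.mem_filter.1 hq).2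
    simp only [rep, dif_pos hg]
    exact hg.choose_spec.1
  · intro v hv
    obtain ⟨w, hw, hvw⟩ := hP.2 v hv
    obtain ⟨g, hg, hgc⟩ := hS v hv w (hP.1 w hw) hvw
    have hgood : good (w, g) := ⟨v, hv, hgc⟩
    refine ⟨rep (w, g), Finset.mem_image_of_mem _
      (Finset.mem_filter.2 ⟨by simp [hw, hg], hgood⟩), fun j => ?_⟩
    have h1 := hgood.choose_spec.2 j
    have h2 := hgc j
    have : v - rep (w, g) = (v - w - g) - (hgood.choose - w - g) := by
      simp only [rep, dif_pos hgood]; abel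
    rw [this, inner_sub_left]
    refine (abs_sub _ _).trans ?_
    simp only at h1
    linarith
  · refine Finset.card_image_le.trans ((Finset.card_filter_le _ _).trans ?_)
    rw [Finset.card_product]

theorem entropy {ι : Type*} [Fintype ι] {E : Type*} [NormedAddCommGroup E]
    [InnerProductSpace ℝ E] [FiniteDimensional ℝ E] (κ : ι → E) (N : ℕ)
    (hN : Module.finrank ℝ E ≤ N) (B : Set E) (h0 : (0 : E) ∈ B) (p M H Q : ℝ)
    (hp : 1 ≤ p) (hM : 0 < M) (hH : 0 < H) (hQ : 0 ≤ Q)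
    (hκ : ∀ j, ‖κ j‖ ≤ H) (hB : ∀ v ∈ B, ∀ j, |inner ℝ v (κ j)| ≤ M)
    (hb : ∀ v ∈ B, ∀ w ∈ B, ∀ ε : ℝ, 0 < ε → (∀ j, |inner ℝ (v - w) (κ j)| ≤ ε) →
      ‖v - w‖ ^ 2 * H ^ 2 ≤ Q * ε ^ 2 * (M / ε) ^ p) (k : ℕ) :
    ∃ P : Finset E, (k = 0 → P = {0}) ∧ IsCov κ B P (M * ((2 : ℝ) ^ (-(1 / p))) ^ k) ∧
      (P.card : ℝ) ≤ Real.exp (∑ i ∈ Finset.range k,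
        min ((16 * Q + 1) * 2 ^ i * Real.log (2 * Fintype.card ι + 1)) (4 * N)) := by
  classical
  set σ : ℝ := (2 : ℝ) ^ (-(1 / p)) with hσ
  have hσ0 : 0 < σ := by positivity
  have hσh : 1 / 2 ≤ σ := by
    have : (2 : ℝ) ^ (-1 : ℝ) ≤ σ := by
      rw [hσ]
      apply Real.rpow_le_rpow_of_exponent_le (by norm_num)
      have : 1 / p ≤ 1 := by rw [div_le_one (by linarith)]; exact hp
      linarith
    rw [Real.rpow_neg_one] at this
    linarith
  have hσp : σ ^ p = 1 / 2 := by
    rw [hσ, ← Real.rpow_mul (by norm_num)]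
    have : -(1 / p) * p = -1 := by field_simp
    rw [this, Real.rpow_neg_one]; norm_num
  set Lg := Real.log (2 * Fintype.card ι + 1) with hLg
  have hL0 : 0 ≤ Lg := Real.log_nonneg (by have : (0 : ℝ) ≤ Fintype.card ι := by positivity
                                           linarith)
  induction k with
  | zero =>
    refine ⟨{0}, fun _ => rfl, ⟨by simpa using h0, ?_⟩, by simp⟩
    intro v hv
    exact ⟨0, by simp, by simpa using hB v hv⟩
  | succ k ih =>
    obtain ⟨P, -, hP, hcard⟩ := ih
    set ε := M * σ ^ k with hε
    have hε0 : 0 < ε := by positivity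
    have hMε : (M / ε) ^ p = 2 ^ k := by
      have : M / ε = (σ ^ k)⁻¹ := by rw [hε]; field_simp
      rw [this, Real.inv_rpow (by positivity), ← Real.rpow_natCast, ← Real.rpow_mul hσ0.le,
        mul_comm, Real.rpow_mul hσ0.le, hσp, Real.rpow_natCast]
      simp
    have key : ∃ S : Finset E, (S.card : ℝ) ≤ Real.exp (min ((16 * Q + 1) * 2 ^ k * Lg) (4 * N)) ∧
        (∀ v ∈ B, ∀ w ∈ B, (∀ j, |inner ℝ (v - w) (κ j)| ≤ ε) →
      ∃ g ∈ S, ∀ j, |inner ℝ (v - w - g) (κ j)| ≤ ε / 4) := by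
      rcases min_cases ((16 * Q + 1) * 2 ^ k * Lg) (4 * (N : ℝ)) with ⟨h1, _⟩ | ⟨h1, _⟩
      · rw [h1]
        obtain ⟨S, hS, -, hc⟩ := perceptron κ H (ε / 4) hH (by positivity) hκ ⌈16 * Q * 2 ^ k⌉₊
        refine ⟨S, ?_, ?_⟩
        · have h2 : (S.card : ℝ) ≤ (2 * Fintype.card ι + 1 : ℝ) ^ ⌈16 * Q * 2 ^ k⌉₊ := by
            exact_mod_cast hS
          refine h2.trans ?_
          rw [← Real.exp_log (show (0 : ℝ) < 2 * Fintype.card ι + 1 by positivity), ← hLg,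
            ← Real.exp_nat_mul]
          apply Real.exp_le_exp.2
          gcongr
          have := (Nat.ceil_lt_add_one (show 0 ≤ 16 * Q * 2 ^ k by positivity)).le
          have h3 : (1 : ℝ) ≤ 2 ^ k := one_le_pow₀ (by norm_num)
          linarith
        · intro v hv w hw hvw
          apply hc
          have h4 := hb v hv w hw ε hε0 hvw
          rw [hMε] at h4
          have h5 := Nat.le_ceil (16 * Q * 2 ^ k)
          have h6 : 16 * Q * 2 ^ k * (ε / 4) ^ 2 ≤ (⌈16 * Q * 2 ^ k⌉₊ : ℝ) * (ε / 4) ^ 2 := by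
            gcongr
          refine h4.trans (le_trans (le_of_eq ?_) h6)
          ring
      · rw [h1]
        obtain ⟨S, hS, hc⟩ := vol_three κ N hN (ε / 4) (by positivity)
        refine ⟨S, ?_, ?_⟩
        · have h2 : (S.card : ℝ) ≤ (25 : ℝ) ^ N := by exact_mod_cast hS
          refine h2.trans ?_
          rw [mul_comm, Real.exp_nat_mul]
          gcongr
          have := Real.exp_one_gt_d9
          have h4 : Real.exp 4 = Real.exp 1 ^ 4 := by rw [← Real.exp_nat_mul]; norm_num
          rw [h4]
          calc (25 : ℝ) ≤ 2.7 ^ 4 := by norm_num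
            _ ≤ _ := by gcongr; linarith
        · intro v hv w hw hvw
          exact hc _ (fun j => by linarith [hvw j])
    obtain ⟨S, hScard, hS⟩ := key
    obtain ⟨P', hP', hcard'⟩ := cov_refine κ B P ε hP S hS
    refine ⟨P', by simp, ⟨hP'.1, fun v hv => ?_⟩, ?_⟩
    · obtain ⟨w, hw, hvw⟩ := hP'.2 v hv
      refine ⟨w, hw, fun j => (hvw j).trans ?_⟩
      rw [pow_succ, ← mul_assoc, ← hε]
      nlinarith
    · rw [Finset.sum_range_succ, Real.exp_add]
      have : (P'.card : ℝ) ≤ P.card * S.card := by exact_mod_cast hcard'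
      exact this.trans (by gcongr)

open MeasureTheory

theorem chain {ι : Type*} [Fintype ι] [DecidableEq ι] {E : Type*} [NormedAddCommGroup E]
    [InnerProductSpace ℝ E] (κ : ι × Bool → E) (B : Set E) (p M σ D R n : ℝ)
    (hp0 : 0 < p) (hp2 : p ≤ 2) (hM : 0 < M) (hσ0 : 0 < σ) (hσ1 : σ ≤ 1) (hσp : σ ^ p = 1 / 2)
    (hD : 0 < D) (hR : 0 < R) (hn : n = Fintype.card (ι × Bool)) (hn1 : 1 ≤ n)
    (P : ℕ → Finset E) (h : ℕ → ℝ) (hmono : Monotone h) (hh0 : ∀ k, 0 ≤ h k)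
    (hP0 : P 0 = {0}) (hP : ∀ k, IsCov κ B (P k) (M * σ ^ k))
    (hcard : ∀ k, ((P k).card : ℝ) ≤ Real.exp (h k))
    (Y : E → ι × Bool → ℝ) (hY0 : ∀ j, Y 0 j = 0) (hY : ∀ v j, 0 ≤ Y v j)
    (hinc : ∀ v ∈ B, ∀ w ∈ B, ∀ δ : ℝ, 0 ≤ δ → (∀ j, |inner ℝ (v - w) (κ j)| ≤ δ) →
      ∀ j, (Y v j - Y w j) ^ 2 ≤ D * (δ / M) ^ p * (Y v j + Y w j))
    (hsum : ∀ v ∈ B, ∑ j, Y v j ≤ R * n) (k1 : ℕ) (hk1 : n ^ 2 ≤ 2 ^ k1) :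
    ∃ bad : Finset (ι → Bool), 4 * (bad.card : ℝ) ≤ 2 ^ Fintype.card ι ∧
      ∀ e, e ∉ bad → ∀ v ∈ B,
        |∑ i, sgnB (e i) * (Y v (i, true) - Y v (i, false))| ≤
          ∑ k ∈ Finset.range k1,
            Real.sqrt (32 * D * R * n * ((1 / 2) ^ k * (2 * h (k + 1) + k + 4)))
          + Real.sqrt (2 * R * D * n) := by
  classical
  have hσk : ∀ k : ℕ, (σ ^ k) ^ p = (1 / 2) ^ k := by
    intro k
    rw [← Real.rpow_natCast, ← Real.rpow_mul hσ0.le, mul_comm, Real.rpow_mul hσ0.le, hσp,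
      Real.rpow_natCast]
  set S : E → (ι → Bool) → ℝ := fun v e => ∑ i, sgnB (e i) * (Y v (i, true) - Y v (i, false)) with hS
  let near : ℕ → E × E → Prop := fun k q => ∀ j, |inner ℝ (q.2 - q.1) (κ j)| ≤ 2 * M * σ ^ k
  let u : ℕ → ℝ := fun k => 2 * h (k + 1) + k + 4
  have hu : ∀ k, 0 ≤ u k := fun k => by have := hh0 (k + 1); simp only [u]; positivity
  let v2 : ℕ → ℝ := fun k => 16 * D * R * n * (1 / 2) ^ k
  let bd : ℕ → E × E → Finset (ι → Bool) := fun k q => Finset.univ.filter fun e =>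
    Real.sqrt (2 * v2 k * u k) < |∑ i, sgnB (e i) *
      ((Y q.2 (i, true) - Y q.1 (i, true)) - (Y q.2 (i, false) - Y q.1 (i, false)))|
  let bk : ℕ → Finset (ι → Bool) := fun k => ((P k ×ˢ P (k + 1)).filter (near k)).biUnion (bd k)
  have hn0 : 0 < n := by linarith
  have hbd : ∀ k, ∀ q ∈ (P k ×ˢ P (k + 1)).filter (near k),
      ((bd k q).card : ℝ) ≤ 2 ^ Fintype.card ι * (2 * Real.exp (- u k)) := by
    intro k q hq
    rw [Finset.mem_filter, Finset.mem_product] at hq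
    apply hoeff
    · simp only [v2]; positivity
    · exact hu k
    · have hq1 := (hP k).1 _ hq.1.1
      have hq2 := (hP (k + 1)).1 _ hq.1.2
      have hi := hinc q.2 hq2 q.1 hq1 (2 * M * σ ^ k) (by positivity) hq.2
      have hfac : (2 * M * σ ^ k / M) ^ p ≤ 4 * (1 / 2) ^ k := by
        have : 2 * M * σ ^ k / M = 2 * σ ^ k := by field_simp
        rw [this, Real.mul_rpow (by norm_num) (by positivity), hσk]
        gcongr
        calc (2 : ℝ) ^ p ≤ 2 ^ (2 : ℝ) := Real.rpow_le_rpow_of_exponent_le (by norm_num) hp2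
          _ = 4 := by norm_num
      have h1 : ∑ j, (Y q.2 j - Y q.1 j) ^ 2 ≤ 8 * D * R * n * (1 / 2) ^ k := by
        calc ∑ j, (Y q.2 j - Y q.1 j) ^ 2
            ≤ ∑ j, D * (4 * (1 / 2) ^ k) * (Y q.2 j + Y q.1 j) := by
              apply Finset.sum_le_sum
              intro j _
              refine (hi j).trans ?_
              have := add_nonneg (hY q.2 j) (hY q.1 j)
              gcongr
          _ = D * (4 * (1 / 2) ^ k) * (∑ j, Y q.2 j + ∑ j, Y q.1 j) := by
              rw [← Finset.mul_sum, Finset.sum_add_distrib]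
          _ ≤ D * (4 * (1 / 2) ^ k) * (R * n + R * n) := by
              gcongr
              · exact hsum _ hq2
              · exact hsum _ hq1
          _ = _ := by ring
      calc _ ≤ ∑ i : ι, 2 * ((Y q.2 (i, true) - Y q.1 (i, true)) ^ 2
                + (Y q.2 (i, false) - Y q.1 (i, false)) ^ 2) := by
              apply Finset.sum_le_sum
              intro i _
              nlinarith [sq_nonneg ((Y q.2 (i, true) - Y q.1 (i, true)) +
                (Y q.2 (i, false) - Y q.1 (i, false)))]
        _ = 2 * ∑ j, (Y q.2 j - Y q.1 j) ^ 2 := by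
              rw [Fintype.sum_prod_type, Finset.mul_sum]
              simp
        _ ≤ v2 k := by simp only [v2]; linarith
  have hbk : ∀ k, ((bk k).card : ℝ) ≤ 2 ^ Fintype.card ι * ((1 / 8) * (1 / 2) ^ k) := by
    intro k
    have h1 : ((bk k).card : ℝ) ≤ ∑ q ∈ (P k ×ˢ P (k + 1)).filter (near k), ((bd k q).card : ℝ) := by
      exact_mod_cast Finset.card_biUnion_le
    have h2 := Finset.sum_le_card_nsmul _ _ _ (hbd k)
    have h3 : (((P k ×ˢ P (k + 1)).filter (near k)).card : ℝ) ≤ Real.exp (2 * h (k + 1)) := by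
      calc (((P k ×ˢ P (k + 1)).filter (near k)).card : ℝ) ≤ ((P k ×ˢ P (k + 1)).card : ℝ) := by
            exact_mod_cast Finset.card_filter_le _ _
        _ = (P k).card * (P (k + 1)).card := by rw [Finset.card_product]; push_cast; ring
        _ ≤ Real.exp (h k) * Real.exp (h (k + 1)) := by
            gcongr
            · exact hcard k
            · exact hcard (k + 1)
        _ = Real.exp (h k + h (k + 1)) := (Real.exp_add _ _).symm
        _ ≤ _ := by
            apply Real.exp_le_exp.2
            have := hmono (Nat.le_succ k)
            simp only [Nat.succ_eq_add_one] at this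
            linarith
    rw [nsmul_eq_mul] at h2
    refine h1.trans (h2.trans ?_)
    calc _ ≤ Real.exp (2 * h (k + 1)) * (2 ^ Fintype.card ι * (2 * Real.exp (- u k))) := by
          gcongr
      _ = 2 ^ Fintype.card ι * (2 * Real.exp (2 * h (k + 1) + - u k)) := by
          rw [Real.exp_add]; ring
      _ ≤ 2 ^ Fintype.card ι * ((1 / 8) * (1 / 2) ^ k) := by
          refine mul_le_mul_of_nonneg_left ?_ (by positivity)
          have h4 : 2 * h (k + 1) + - u k = ((k + 4 : ℕ) : ℝ) * (-1) := by
            simp only [u]; push_cast; ring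
          rw [h4, Real.exp_nat_mul]
          have h5 : Real.exp (-1) ≤ 1 / 2 := by
            rw [Real.exp_neg, inv_le_comm₀ (Real.exp_pos _) (by norm_num)]
            have := Real.exp_one_gt_d9
            norm_num; linarith
          have h6 : Real.exp (-1) ^ (k + 4) ≤ (1 / 2) ^ (k + 4) := by gcongr
          have h7 : ((1 : ℝ) / 2) ^ (k + 4) = (1 / 16) * (1 / 2) ^ k := by ring
          linarith
  refine ⟨(Finset.range k1).biUnion bk, ?_, ?_⟩
  · have h1 : (((Finset.range k1).biUnion bk).card : ℝ) ≤ ∑ k ∈ Finset.range k1, ((bk k).card : ℝ) := by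
      exact_mod_cast Finset.card_biUnion_le
    have h2 : ∑ k ∈ Finset.range k1, ((bk k).card : ℝ) ≤
        ∑ k ∈ Finset.range k1, 2 ^ Fintype.card ι * ((1 / 8) * (1 / 2) ^ k) :=
      Finset.sum_le_sum fun k _ => hbk k
    rw [← Finset.mul_sum, ← Finset.mul_sum] at h2
    have h3 : ∑ k ∈ Finset.range k1, ((1 : ℝ) / 2) ^ k ≤ 2 := sum_geometric_two_le k1
    have h4 : (0 : ℝ) < 2 ^ Fintype.card ι := by positivity
    nlinarith
  · intro e he v hv
    choose π hπ hπn using fun k => (hP k).2 v hv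
    have hlink : ∀ k < k1, |S (π (k + 1)) e - S (π k) e| ≤ Real.sqrt (2 * v2 k * u k) := by
      intro k hk
      by_contra hc
      push Not at hc
      apply he
      rw [Finset.mem_biUnion]
      refine ⟨k, Finset.mem_range.2 hk, ?_⟩
      rw [Finset.mem_biUnion]
      refine ⟨(π k, π (k + 1)), ?_, ?_⟩
      · rw [Finset.mem_filter, Finset.mem_product]
        refine ⟨⟨hπ k, hπ (k + 1)⟩, fun j => ?_⟩
        have : π (k + 1) - π k = (v - π k) - (v - π (k + 1)) := by abel
        simp only [this, inner_sub_left (v - π k)]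
        refine (abs_sub _ _).trans ?_
        have h1 := hπn k j
        have h2 := hπn (k + 1) j
        have h3 : M * σ ^ (k + 1) ≤ M * σ ^ k := by
          gcongr ?_ * ?_
          exact pow_le_pow_of_le_one hσ0.le hσ1 (Nat.le_succ k)
        linarith
      · simp only [bd, Finset.mem_filter, Finset.mem_univ, true_and]
        refine hc.trans_le (le_of_eq ?_)
        simp only [hS]
        rw [← Finset.sum_sub_distrib]
        congr 1
        exact Finset.sum_congr rfl fun i _ => by ring
    have hch : ∀ k ≤ k1, |S (π k) e| ≤ ∑ i ∈ Finset.range k, Real.sqrt (2 * v2 i * u i) := by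
      intro k
      induction k with
      | zero =>
        intro _
        have : π 0 = 0 := by
          have := hπ 0
          rw [hP0] at this
          simpa using this
        simp [this, hS, hY0]
      | succ k ih =>
        intro hk
        have h1 := ih (by omega)
        have h2 := hlink k (by omega)
        rw [Finset.sum_range_succ]
        have : S (π (k + 1)) e = S (π k) e + (S (π (k + 1)) e - S (π k) e) := by ring
        rw [this]
        refine (abs_add_le _ _).trans (add_le_add h1 h2)
    have hlast : |S v e - S (π k1) e| ≤ Real.sqrt (2 * R * D * n) := by
      have hw := (hP k1).1 _ (hπ k1)
      have hi := hinc v hv (π k1) hw (M * σ ^ k1) (by positivity) (hπn k1)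
      have hfac : (M * σ ^ k1 / M) ^ p = (1 / 2) ^ k1 := by
        have : M * σ ^ k1 / M = σ ^ k1 := by field_simp
        rw [this, hσk]
      have hb : ∀ j, |Y v j - Y (π k1) j| ≤ Real.sqrt (2 * R * D / n) := by
        intro j
        rw [← Real.sqrt_sq_eq_abs]
        apply Real.sqrt_le_sqrt
        refine (hi j).trans ?_
        rw [hfac]
        have h1 : Y v j ≤ R * n :=
          (Finset.single_le_sum (f := Y v) (fun j _ => hY v j) (Finset.mem_univ j)).trans (hsum v hv)
        have h2 : Y (π k1) j ≤ R * n :=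
          (Finset.single_le_sum (f := Y (π k1)) (fun j _ => hY _ j) (Finset.mem_univ j)).trans
            (hsum _ hw)
        calc D * (1 / 2) ^ k1 * (Y v j + Y (π k1) j) ≤ D * (1 / n ^ 2) * (R * n + R * n) := by
              have h3 := add_nonneg (hY v j) (hY (π k1) j)
              gcongr
              rw [one_div_pow]
              exact one_div_le_one_div_of_le (by positivity) hk1
          _ = _ := by field_simp; ring
      calc |S v e - S (π k1) e| = |∑ i, sgnB (e i) *
            ((Y v (i, true) - Y (π k1) (i, true)) - (Y v (i, false) - Y (π k1) (i, false)))| := by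
            simp only [hS]
            rw [← Finset.sum_sub_distrib]
            congr 1
            exact Finset.sum_congr rfl fun i _ => by ring
        _ ≤ ∑ i, (|Y v (i, true) - Y (π k1) (i, true)| + |Y v (i, false) - Y (π k1) (i, false)|) := by
            refine (Finset.abs_sum_le_sum_abs _ _).trans (Finset.sum_le_sum fun i _ => ?_)
            rw [abs_mul]
            have : |sgnB (e i)| = 1 := by cases e i <;> simp [sgnB]
            rw [this, one_mul]
            exact abs_sub _ _
        _ = ∑ j, |Y v j - Y (π k1) j| := by
            rw [Fintype.sum_prod_type]; simp
        _ ≤ ∑ j : ι × Bool, Real.sqrt (2 * R * D / n) := Finset.sum_le_sum fun j _ => hb j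
        _ = n * Real.sqrt (2 * R * D / n) := by
            rw [Finset.sum_const, nsmul_eq_mul, hn]; rfl
        _ = Real.sqrt (2 * R * D * n) := by
            nth_rw 1 [← Real.sqrt_sq hn0.le]
            rw [← Real.sqrt_mul (by positivity)]
            congr 1; field_simp
    have hf := hch k1 le_rfl
    have : S v e = S (π k1) e + (S v e - S (π k1) e) := by ring
    change |S v e| ≤ _
    rw [this]
    refine (abs_add_le _ _).trans (add_le_add (hf.trans (le_of_eq ?_)) hlast)
    refine Finset.sum_congr rfl fun k _ => ?_
    congr 1
    simp only [v2, u]; ring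

open MeasureTheory

theorem geo_bound (i : ℕ) : ((i : ℝ) + 1) * (1 / 2) ^ i ≤ 2 * ((7 / 8) ^ i) ^ 2 := by
  have h1 : 1 + (i : ℝ) * (1 / 2) ≤ (1 + 1 / 2) ^ i :=
    one_add_mul_le_pow (by norm_num) i
  have h2 : ((i : ℝ) + 1) ≤ 2 * (3 / 2) ^ i := by
    norm_num at h1 ⊢; linarith
  calc ((i : ℝ) + 1) * (1 / 2) ^ i ≤ (2 * (3 / 2) ^ i) * (1 / 2) ^ i := by gcongr
    _ = 2 * (3 / 4) ^ i := by rw [mul_assoc, ← mul_pow]; norm_num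
    _ ≤ 2 * (49 / 64) ^ i := by
        have := pow_le_pow_left₀ (by norm_num) (by norm_num : (3 / 4 : ℝ) ≤ 49 / 64) i
        linarith
    _ = _ := by rw [← pow_mul, mul_comm i 2, pow_mul]; norm_num

theorem numer (c L : ℝ) (hc : 0 ≤ c) (hL : 1 ≤ L) (N : ℕ) (hN : 1 ≤ N) (h : ℕ → ℝ)
    (hh : ∀ k, h k = ∑ i ∈ Finset.range k, min (c * 2 ^ i * L) (4 * N)) (k1 : ℕ) :
    ∑ k ∈ Finset.range k1, Real.sqrt ((1 / 2) ^ k * (2 * h (k + 1) + k + 4)) ≤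
      9 * Real.logb 2 (2 * N) * Real.sqrt ((4 * c + 24) * L) := by
  set j0 := Nat.log 2 N + 1 with hj0
  have hNj : (N : ℝ) ≤ 2 ^ j0 := by
    exact_mod_cast (Nat.lt_pow_succ_log_self (by norm_num) N).le
  have hN0 : (0 : ℝ) < N := by exact_mod_cast hN
  have hjl : (j0 : ℝ) ≤ Real.logb 2 (2 * N) := by
    rw [Real.logb_mul (by norm_num) hN0.ne', Real.logb_self_eq_one (by norm_num), hj0]
    push_cast
    have : ((Nat.log 2 N : ℕ) : ℝ) ≤ Real.logb 2 N := by
      rw [Real.le_logb_iff_rpow_le (by norm_num) hN0, Real.rpow_natCast]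
      exact_mod_cast Nat.pow_log_le_self 2 (by omega)
    linarith
  have hl1 : 1 ≤ Real.logb 2 (2 * N) := by
    refine le_trans ?_ hjl
    rw [hj0]; push_cast; linarith [(Nat.cast_nonneg (Nat.log 2 N) : (0:ℝ) ≤ _)]
  have hA : ∀ k, h k ≤ c * 2 ^ k * L := by
    intro k
    rw [hh]
    calc _ ≤ ∑ i ∈ Finset.range k, c * L * 2 ^ i :=
          Finset.sum_le_sum fun i _ => (min_le_left _ _).trans (by linarith)
      _ = c * L * (2 ^ k - 1) := by
          rw [← Finset.mul_sum, geom_sum_eq (by norm_num)]; norm_num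
      _ ≤ _ := by nlinarith [mul_nonneg hc (by linarith : (0:ℝ) ≤ L)]
  have hB : ∀ i : ℕ, h (j0 + i) ≤ c * 2 ^ j0 * L + 4 * N * i := by
    intro i
    induction i with
    | zero => simpa using hA j0
    | succ i ih =>
      have : h (j0 + (i + 1)) = h (j0 + i) + min (c * 2 ^ (j0 + i) * L) (4 * N) := by
        rw [hh, hh, ← add_assoc, Finset.sum_range_succ]
      rw [this]
      have := min_le_right (c * 2 ^ (j0 + i) * L) (4 * (N : ℝ))
      push_cast; linarith
  have h2k : ∀ k : ℕ, (k : ℝ) + 1 ≤ 2 ^ k := fun k => by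
    exact_mod_cast Nat.lt_two_pow_self
  let w : ℕ → ℝ := fun k => if k < j0 then 1 else (7 / 8) ^ (k - j0)
  have hw0 : ∀ k, 0 ≤ w k := fun k => by simp only [w]; split_ifs <;> positivity
  have hterm : ∀ k, Real.sqrt ((1 / 2) ^ k * (2 * h (k + 1) + k + 4)) ≤
      Real.sqrt ((4 * c + 24) * L) * w k := by
    intro k
    by_cases hk : k < j0
    · simp only [w, if_pos hk, mul_one]
      apply Real.sqrt_le_sqrt
      have h1 := hA (k + 1)
      have h3 := h2k k
      have hp : (0 : ℝ) < 2 ^ k := by positivity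
      rw [one_div_pow, one_div, inv_mul_le_iff₀ hp]
      rw [pow_succ] at h1
      have h4 : (k : ℝ) + 4 ≤ 24 * 2 ^ k := by linarith
      have h5 : 24 * (2 : ℝ) ^ k ≤ 24 * 2 ^ k * L := by nlinarith
      linarith
    · obtain ⟨i, rfl⟩ := Nat.exists_eq_add_of_le (not_lt.1 hk)
      simp only [w, if_neg hk, Nat.add_sub_cancel_left]
      have h1 := hB (i + 1)
      rw [← add_assoc] at h1
      have hp : (0 : ℝ) < 2 ^ j0 := by positivity
      have hi : (0 : ℝ) ≤ i := Nat.cast_nonneg i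
      have hi1 : (1 : ℝ) ≤ i + 1 := by linarith
      have h3 : c * 2 ^ j0 * L ≤ c * 2 ^ j0 * L * (i + 1) := by
        have : 0 ≤ c * 2 ^ j0 * L := by positivity
        nlinarith
      have h4 : 4 * (N : ℝ) * (i + 1) ≤ 4 * 2 ^ j0 * L * (i + 1) := by
        have h41 : (N : ℝ) ≤ 2 ^ j0 * L := by nlinarith
        have h42 := mul_le_mul_of_nonneg_right h41 (by linarith : (0 : ℝ) ≤ i + 1)
        linarith
      have h5 : ((j0 : ℝ) + i) + 4 ≤ 4 * 2 ^ j0 * L * (i + 1) := by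
        have h6 := h2k j0
        have h7 : ((j0 : ℝ) + 1) * 1 ≤ 2 ^ j0 * L := by gcongr
        have h8 : ((j0 : ℝ) + 1) * (i + 1) ≤ 2 ^ j0 * L * (i + 1) := by
          rw [mul_one] at h7; gcongr
        have h9 : (0 : ℝ) ≤ j0 := Nat.cast_nonneg j0
        nlinarith
      have h10 : (1 / 2 : ℝ) ^ (j0 + i) * (2 * h (j0 + i + 1) + ((j0 + i : ℕ) : ℝ) + 4) ≤
          ((2 * c + 12) * L) * ((i + 1) * (1 / 2) ^ i) := by
        have : 2 * h (j0 + i + 1) + ((j0 + i : ℕ) : ℝ) + 4 ≤ (2 * c + 12) * L * (i + 1) * 2 ^ j0 := by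
          push_cast at h1 ⊢; linarith
        calc _ ≤ (1 / 2 : ℝ) ^ (j0 + i) * ((2 * c + 12) * L * (i + 1) * 2 ^ j0) := by gcongr
          _ = ((2 * c + 12) * L) * ((i + 1) * (1 / 2) ^ i) * ((1 / 2) ^ j0 * 2 ^ j0) := by
              rw [pow_add]; ring
          _ = _ := by rw [← mul_pow]; norm_num
      have h11 := geo_bound i
      have h12 : (1 / 2 : ℝ) ^ (j0 + i) * (2 * h (j0 + i + 1) + ((j0 + i : ℕ) : ℝ) + 4) ≤
          ((4 * c + 24) * L) * ((7 / 8) ^ i) ^ 2 := by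
        refine h10.trans ?_
        calc _ ≤ ((2 * c + 12) * L) * (2 * ((7 / 8) ^ i) ^ 2) := by gcongr
          _ = _ := by ring
      calc _ ≤ Real.sqrt (((4 * c + 24) * L) * ((7 / 8) ^ i) ^ 2) := Real.sqrt_le_sqrt h12
        _ = _ := by rw [Real.sqrt_mul (by positivity), Real.sqrt_sq (by positivity)]
  have hsumw : ∑ k ∈ Finset.range k1, w k ≤ j0 + 8 := by
    calc ∑ k ∈ Finset.range k1, w k ≤ ∑ k ∈ Finset.range (j0 + k1), w k := by
          apply Finset.sum_le_sum_of_subset_of_nonneg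
          · exact Finset.range_mono (by omega)
          · intros; exact hw0 _
      _ = ∑ k ∈ Finset.range j0, w k + ∑ i ∈ Finset.range k1, w (j0 + i) :=
          Finset.sum_range_add _ _ _
      _ = j0 + ∑ i ∈ Finset.range k1, (7 / 8 : ℝ) ^ i := by
          congr 1
          · rw [Finset.sum_congr rfl (g := fun _ => (1 : ℝ))]
            · simp
            · intro k hk; simp only [w, if_pos (Finset.mem_range.1 hk)]
          · refine Finset.sum_congr rfl fun i _ => ?_
            simp [w]
      _ ≤ _ := by
          gcongr
          rw [geom_sum_eq (by norm_num)]
          have : (0 : ℝ) ≤ (7 / 8) ^ k1 := by positivity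
          rw [div_le_iff_of_neg (by norm_num)]
          linarith
  calc _ ≤ ∑ k ∈ Finset.range k1, Real.sqrt ((4 * c + 24) * L) * w k :=
        Finset.sum_le_sum fun k _ => hterm k
    _ = Real.sqrt ((4 * c + 24) * L) * ∑ k ∈ Finset.range k1, w k := by rw [Finset.mul_sum]
    _ ≤ Real.sqrt ((4 * c + 24) * L) * (9 * Real.logb 2 (2 * N)) := by
        gcongr
        linarith
    _ = _ := by ring

theorem step_class {ι : Type*} [Fintype ι] [DecidableEq ι] [Nonempty ι] {E : Type*}
    [NormedAddCommGroup E]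
    [InnerProductSpace ℝ E] [FiniteDimensional ℝ E] (κ : ι × Bool → E) (N : ℕ) (hN1 : 1 ≤ N)
    (hN : Module.finrank ℝ E ≤ N) (B : Set E) (h0 : (0 : E) ∈ B) (p M H D n : ℝ)
    (hp : 1 ≤ p) (hp2 : p ≤ 2) (hM : 0 < M) (hH : 0 < H)
    (hD : 0 < D) (hn : n = Fintype.card (ι × Bool))
    (hκ : ∀ j, ‖κ j‖ ≤ H) (hB : ∀ v ∈ B, ∀ j, |inner ℝ v (κ j)| ≤ M)
    (hb : ∀ v ∈ B, ∀ w ∈ B, ∀ ε : ℝ, 0 < ε → (∀ j, |inner ℝ (v - w) (κ j)| ≤ ε) →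
      ‖v - w‖ ^ 2 * H ^ 2 ≤ 32 * ε ^ 2 * (M / ε) ^ p)
    (Y : E → ι × Bool → ℝ) (hY0 : ∀ j, Y 0 j = 0) (hY : ∀ v j, 0 ≤ Y v j)
    (hinc : ∀ v ∈ B, ∀ w ∈ B, ∀ δ : ℝ, 0 ≤ δ → (∀ j, |inner ℝ (v - w) (κ j)| ≤ δ) →
      ∀ j, (Y v j - Y w j) ^ 2 ≤ D * (δ / M) ^ p * (Y v j + Y w j))
    (hsum : ∀ v ∈ B, ∑ j, Y v j ≤ 2 * n) :
    ∃ bad : Finset (ι → Bool), 4 * (bad.card : ℝ) ≤ 2 ^ Fintype.card ι ∧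
      ∀ e, e ∉ bad → ∀ v ∈ B,
        |∑ i, sgnB (e i) * (Y v (i, true) - Y v (i, false))| ≤
          4000 * Real.logb 2 (2 * N) * Real.sqrt (D * n * Real.log (2 * n + 1)) := by
  classical
  have hn1 : 1 ≤ n := by
    rw [hn]
    exact_mod_cast Fintype.card_pos
  have hn0 : 0 < n := by linarith
  set L := Real.log (2 * n + 1) with hLdef
  have hL : 1 ≤ L := by
    rw [hLdef, Real.le_log_iff_exp_le (by linarith)]
    have := Real.exp_one_lt_d9
    linarith
  choose P hP0 hP hcard using fun k => entropy κ N hN B h0 p M H 32 hp hM hH (by norm_num) hκ hB hb k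
  rw [← hn, ← hLdef] at hcard
  set h : ℕ → ℝ := fun k => ∑ i ∈ Finset.range k, min ((16 * 32 + 1) * 2 ^ i * L) (4 * (N:ℝ)) with hh
  have hpos : ∀ i : ℕ, 0 ≤ min ((16 * 32 + 1) * 2 ^ i * L) (4 * (N:ℝ)) := fun i =>
    le_min (by positivity) (by positivity)
  have hmono : Monotone h := by
    apply monotone_nat_of_le_succ
    intro k
    simp only [hh]
    rw [Finset.sum_range_succ]
    linarith [hpos k]
  have hh0 : ∀ k, 0 ≤ h k := fun k => Finset.sum_nonneg fun i _ => hpos i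
  set σ : ℝ := (2 : ℝ) ^ (-(1 / p)) with hσ
  have hσ0 : 0 < σ := by positivity
  have hσ1 : σ ≤ 1 := by
    apply Real.rpow_le_one_of_one_le_of_nonpos (by norm_num)
    have : 0 < 1 / p := by positivity
    linarith
  have hσp : σ ^ p = 1 / 2 := by
    rw [hσ, ← Real.rpow_mul (by norm_num)]
    have : -(1 / p) * p = -1 := by field_simp
    rw [this, Real.rpow_neg_one]; norm_num
  obtain ⟨k1, hk1⟩ := pow_unbounded_of_one_lt (n ^ 2) (by norm_num : (1 : ℝ) < 2)
  obtain ⟨bad, hbad, hgood⟩ := chain κ B p M σ D 2 n (by linarith) hp2 hM hσ0 hσ1 hσp hD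
    (by norm_num) hn hn1 P h hmono hh0 (hP0 0 rfl) hP hcard Y hY0 hY hinc hsum k1 hk1.le
  refine ⟨bad, hbad, fun e he v hv => (hgood e he v hv).trans ?_⟩
  have hnum := numer (16 * 32 + 1) L (by norm_num) hL N hN1 h (fun k => rfl) k1
  set l := Real.logb 2 (2 * N) with hl
  have hl1 : 1 ≤ l := by
    rw [hl, Real.le_logb_iff_rpow_le (by norm_num) (by positivity), Real.rpow_one]
    have : (1 : ℝ) ≤ N := by exact_mod_cast hN1
    linarith
  have e1 : ∑ k ∈ Finset.range k1, Real.sqrt (32 * D * 2 * n * ((1 / 2) ^ k * (2 * h (k + 1) + k + 4)))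
      = 8 * Real.sqrt (D * n) *
        ∑ k ∈ Finset.range k1, Real.sqrt ((1 / 2) ^ k * (2 * h (k + 1) + k + 4)) := by
    rw [Finset.mul_sum]
    refine Finset.sum_congr rfl fun k _ => ?_
    rw [Real.sqrt_mul (by positivity), show 32 * D * 2 * n = 8 ^ 2 * (D * n) by ring,
      Real.sqrt_mul (by norm_num), Real.sqrt_sq (by norm_num)]
  have e2 : Real.sqrt (2 * 2 * D * n) = 2 * Real.sqrt (D * n) := by
    rw [show 2 * 2 * D * n = 2 ^ 2 * (D * n) by ring, Real.sqrt_mul (by norm_num),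
      Real.sqrt_sq (by norm_num)]
  have e3 : Real.sqrt ((4 * (16 * 32 + 1) + 24) * L) ≤ 46 * Real.sqrt L := by
    rw [Real.sqrt_mul (by norm_num)]
    gcongr
    rw [Real.sqrt_le_left (by norm_num)]
    norm_num
  have e4 : Real.sqrt (D * n * L) = Real.sqrt (D * n) * Real.sqrt L := Real.sqrt_mul (by positivity) _
  have e5 : 1 ≤ Real.sqrt L := by rw [Real.one_le_sqrt]; exact hL
  rw [e1, e2, e4]
  have e6 : 1 ≤ l * Real.sqrt L := by nlinarith
  have hs : 0 ≤ Real.sqrt (D * n) := Real.sqrt_nonneg _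
  have e7 : 9 * l * Real.sqrt ((4 * (16 * 32 + 1) + 24) * L) ≤ 9 * l * (46 * Real.sqrt L) := by gcongr
  have e8 := hnum.trans e7
  calc _ ≤ 8 * Real.sqrt (D * n) * (9 * l * (46 * Real.sqrt L)) + 2 * Real.sqrt (D * n) * (l * Real.sqrt L) := by
        apply add_le_add
        · gcongr
        · nlinarith
    _ = 3314 * (l * (Real.sqrt (D * n) * Real.sqrt L)) := by ring
    _ ≤ 4000 * (l * (Real.sqrt (D * n) * Real.sqrt L)) := by gcongr; norm_num
    _ = _ := by ring

open MeasureTheory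

structure Reg (Ψ : ℝ → ℝ) (p A : ℝ) (q : ℕ) : Prop where
  zero : Ψ 0 = 0
  nonneg : ∀ t, 0 ≤ t → 0 ≤ Ψ t
  mono : MonotoneOn Ψ (Set.Ici 0)
  dec : ∀ s t, 0 < s → s ≤ t → Ψ t * s ^ q ≤ Ψ s * t ^ q
  inc : ∀ s t, 0 < s → s ≤ t → Ψ s * t ^ p ≤ A * Ψ t * s ^ p
  one : 0 < Ψ 1
  hA : 1 ≤ A
  hp : 1 < p
  hp2 : p ≤ 2
  hq : 2 ≤ q

theorem exists_reg (Φ : ℝ → ℝ) (p a b T : ℝ) (q : ℕ) (hp : 1 < p) (hp2 : p ≤ 2) (hq : 2 ≤ q)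
    (ha : 1 ≤ a) (hb : 1 ≤ b) (hT : 1 ≤ T)
    (hmono : MonotoneOn Φ (Set.Ici 0)) (hnn : ∀ t, 0 ≤ t → 0 ≤ Φ t) (hΦT : 0 < Φ T)
    (hinc : ∀ s t, T ≤ s → s ≤ t → Φ s * t ^ p ≤ a * Φ t * s ^ p)
    (hdec : ∀ s t, T ≤ s → s ≤ t → Φ t * s ^ q ≤ b * Φ s * t ^ q) :
    ∃ Ψ : ℝ → ℝ, Reg Ψ p (a * b) q ∧ (∀ t, T ≤ t → Φ t ≤ Ψ t) ∧ (∀ t, T ≤ t → Ψ t ≤ b * Φ t) := by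
  have hT0 : 0 < T := by linarith
  let g : ℝ → Set.Ici T → ℝ := fun t s => Φ s * min 1 ((t / s) ^ q)
  let Ψ : ℝ → ℝ := fun t => ⨆ s, g t s
  have hs0 : ∀ s : Set.Ici T, 0 < (s : ℝ) := fun s => lt_of_lt_of_le hT0 s.2
  have hΦs : ∀ s : Set.Ici T, 0 ≤ Φ s := fun s => hnn _ (hs0 s).le
  have hb1 : ∀ t, 0 ≤ t → ∀ s, g t s ≤ b * Φ (max t T) := by
    intro t ht s
    have hu : T ≤ max t T := le_max_right _ _
    have hu0 : 0 ≤ max t T := hT0.le.trans hu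
    have hΦu := hnn _ hu0
    rcases le_total (s : ℝ) (max t T) with h | h
    · calc g t s ≤ Φ s * 1 := mul_le_mul_of_nonneg_left (min_le_left _ _) (hΦs s)
        _ ≤ Φ (max t T) := by rw [mul_one]; exact hmono (hs0 s).le hu0 h
        _ ≤ _ := by nlinarith
    · calc g t s ≤ Φ s * (t / s) ^ q := mul_le_mul_of_nonneg_left (min_le_right _ _) (hΦs s)
        _ ≤ Φ s * (max t T / s) ^ q := by
            apply mul_le_mul_of_nonneg_left _ (hΦs s)
            apply pow_le_pow_left₀ (div_nonneg ht (hs0 s).le)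
            exact div_le_div_of_nonneg_right (le_max_left _ _) (hs0 s).le
        _ ≤ _ := by
            rw [div_pow, ← mul_div_assoc, div_le_iff₀ (pow_pos (hs0 s) q)]
            exact hdec _ _ hu h
  have hbdd : ∀ t, 0 ≤ t → BddAbove (Set.range (g t)) := fun t ht =>
    ⟨b * Φ (max t T), by rintro _ ⟨s, rfl⟩; exact hb1 t ht s⟩
  have hle : ∀ t, 0 ≤ t → ∀ s, g t s ≤ Ψ t := fun t ht s => le_ciSup (hbdd t ht) s
  have : Nonempty (Set.Ici T) := ⟨⟨T, le_refl T⟩⟩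
  have hup : ∀ t, T ≤ t → Ψ t ≤ b * Φ t := fun t ht => by
    apply ciSup_le
    intro s
    have := hb1 t (hT0.le.trans ht) s
    rwa [max_eq_left ht] at this
  have hlow : ∀ t, T ≤ t → Φ t ≤ Ψ t := fun t ht => by
    have h := hle t (hT0.le.trans ht) ⟨t, ht⟩
    have ht0 : t ≠ 0 := by linarith
    simpa [g, div_self ht0] using h
  have hg0 : ∀ t, 0 ≤ t → ∀ s, 0 ≤ g t s := fun t ht s =>
    mul_nonneg (hΦs s) (le_min zero_le_one (pow_nonneg (div_nonneg ht (hs0 s).le) q))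
  have hΨ0 : ∀ t, 0 ≤ t → 0 ≤ Ψ t := fun t ht => (hg0 t ht ⟨T, le_refl T⟩).trans (hle t ht _)
  have hdecΨ : ∀ s t, 0 < s → s ≤ t → Ψ t * s ^ q ≤ Ψ s * t ^ q := by
    intro s t hs hst
    have hsq : 0 < s ^ q := pow_pos hs q
    rw [← le_div_iff₀ hsq]
    apply ciSup_le
    intro r
    rw [le_div_iff₀ hsq]
    refine le_trans ?_ (mul_le_mul_of_nonneg_right (hle s hs.le r) (pow_nonneg (hs.le.trans hst) q))
    simp only [g]
    rw [mul_assoc, mul_assoc]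
    apply mul_le_mul_of_nonneg_left _ (hΦs r)
    rw [min_mul_of_nonneg _ _ (pow_nonneg hs.le q), min_mul_of_nonneg _ _ (pow_nonneg (hs.le.trans hst) q)]
    apply min_le_min
    · rw [one_mul, one_mul]; exact pow_le_pow_left₀ hs.le hst q
    · rw [div_pow, div_pow]; apply le_of_eq; ring
  have hlowt : ∀ s t, 0 < s → s ≤ t → t ≤ T → Ψ s * t ^ p ≤ Ψ t * s ^ p := by
    intro s t hs hst htT
    have ht : 0 < t := lt_of_lt_of_le hs hst
    have h1 : Ψ s ≤ Ψ t * (s / t) ^ q := by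
      apply ciSup_le
      intro r
      have htr : (t / (r : ℝ)) ^ q ≤ 1 := by
        apply pow_le_one₀ (div_nonneg ht.le (hs0 r).le)
        rw [div_le_one (hs0 r)]
        exact htT.trans r.2
      calc g s r ≤ Φ r * (s / r) ^ q := mul_le_mul_of_nonneg_left (min_le_right _ _) (hΦs r)
        _ = g t r * (s / t) ^ q := by
            simp only [g]
            rw [min_eq_right htr, mul_assoc, ← mul_pow]
            congr 2
            have := (hs0 r).ne'
            field_simp
        _ ≤ _ := mul_le_mul_of_nonneg_right (hle t ht.le r) (by positivity)
    have h2 : (s / t) ^ q ≤ (s / t) ^ p := by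
      rw [← Real.rpow_natCast]
      apply Real.rpow_le_rpow_of_exponent_ge (by positivity) ((div_le_one ht).2 hst)
      have : (2 : ℝ) ≤ q := by exact_mod_cast hq
      linarith
    have h3 : Ψ s ≤ Ψ t * (s / t) ^ p := h1.trans (mul_le_mul_of_nonneg_left h2 (hΨ0 t ht.le))
    rwa [Real.div_rpow hs.le ht.le, ← mul_div_assoc, le_div_iff₀ (by positivity)] at h3
  have hhigh : ∀ s t, T ≤ s → s ≤ t → Ψ s * t ^ p ≤ a * b * Ψ t * s ^ p := by
    intro s t hs hst
    have hs1 : 0 < s := by linarith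
    have ht : 0 < t := by linarith
    have h1 := hinc s t hs hst
    have h2 := hup s hs
    have h3 := hlow t (hs.trans hst)
    have htp : 0 ≤ t ^ p := by positivity
    have hsp : 0 ≤ s ^ p := by positivity
    calc Ψ s * t ^ p ≤ b * Φ s * t ^ p := mul_le_mul_of_nonneg_right h2 htp
      _ = b * (Φ s * t ^ p) := by ring
      _ ≤ b * (a * Φ t * s ^ p) := mul_le_mul_of_nonneg_left h1 (by linarith)
      _ = a * b * s ^ p * Φ t := by ring
      _ ≤ a * b * s ^ p * Ψ t := mul_le_mul_of_nonneg_left h3 (by positivity)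
      _ = _ := by ring
  have hab : 1 ≤ a * b := by nlinarith
  refine ⟨Ψ, ⟨?_, hΨ0, ?_, hdecΨ, ?_, ?_, hab, hp, hp2, hq⟩, hlow, hup⟩
  · have : ∀ s, g 0 s = 0 := fun s => by
      have : q ≠ 0 := by omega
      simp [g, this]
    simp [Ψ, this]
  · intro s hs t ht hst
    apply ciSup_le
    intro r
    refine le_trans ?_ (hle t ht r)
    apply mul_le_mul_of_nonneg_left _ (hΦs r)
    apply min_le_min le_rfl
    apply pow_le_pow_left₀ (div_nonneg hs (hs0 r).le)
    exact div_le_div_of_nonneg_right hst (hs0 r).le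
  · intro s t hs hst
    have ht : 0 < t := lt_of_lt_of_le hs hst
    rcases le_total T s with h | h
    · exact hhigh s t h hst
    rcases le_total t T with h' | h'
    · refine (hlowt s t hs hst h').trans ?_
      have h4 : 0 ≤ Ψ t * s ^ p := mul_nonneg (hΨ0 t ht.le) (by positivity)
      nlinarith
    · have h1 := hlowt s T hs h le_rfl
      have h2 := hhigh T t le_rfl h'
      have hTp : 0 < T ^ p := by positivity
      have hsp : 0 ≤ s ^ p := by positivity
      have htp : 0 ≤ t ^ p := by positivity
      refine le_of_mul_le_mul_right ?_ hTp
      calc Ψ s * t ^ p * T ^ p = Ψ s * T ^ p * t ^ p := by ring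
        _ ≤ Ψ T * s ^ p * t ^ p := mul_le_mul_of_nonneg_right h1 htp
        _ = Ψ T * t ^ p * s ^ p := by ring
        _ ≤ a * b * Ψ t * T ^ p * s ^ p := mul_le_mul_of_nonneg_right h2 hsp
        _ = _ := by ring
  · have h := hdecΨ 1 T one_pos hT
    have h2 := hlow T le_rfl
    have : 0 < Ψ 1 * T ^ q := by
      refine lt_of_lt_of_le ?_ h
      simp; linarith
    exact pos_of_mul_pos_left this (by positivity)

namespace Reg
variable {Ψ : ℝ → ℝ} {p A : ℝ} {q : ℕ}

theorem inc_lip (h : Reg Ψ p A q) (s t M : ℝ) (hs : 0 ≤ s) (hst : s ≤ t) (hM : t ≤ M) (hM0 : 0 < M) :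
    (Ψ t - Ψ s) ^ 2 ≤ q ^ 2 * A * Ψ M * ((t - s) / M) ^ p * Ψ t := by
  have hΨM : 0 ≤ Ψ M := h.nonneg _ hM0.le
  have hp := h.hp
  have hp2 := h.hp2
  have hA := h.hA
  rcases eq_or_lt_of_le hst with rfl | hlt
  · simp
    have := h.nonneg s hs
    positivity
  have ht : 0 < t := lt_of_le_of_lt hs hlt
  have hΨt := h.nonneg t ht.le
  have hmon : Ψ s ≤ Ψ t := h.mono hs ht.le hst
  have h1 : Ψ t - Ψ s ≤ q * Ψ t * ((t - s) / t) := by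
    rcases eq_or_lt_of_le hs with rfl | hs0
    · rw [h.zero]
      have : (1 : ℝ) ≤ q := by exact_mod_cast (by have := h.hq; omega : 1 ≤ q)
      have e : (t - 0) / t = 1 := by field_simp; ring
      rw [e]; nlinarith
    have hd := h.dec s t hs0 hst
    have hbern : 1 + (q : ℝ) * (s / t - 1) ≤ (1 + (s / t - 1)) ^ q := by
      apply one_add_mul_le_pow
      have : 0 ≤ s / t := by positivity
      linarith
    have e1 : (1 + (s / t - 1)) = s / t := by ring
    rw [e1] at hbern
    have h2 : Ψ t * (s / t) ^ q ≤ Ψ s := by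
      rw [div_pow, ← mul_div_assoc, div_le_iff₀ (by positivity)]
      exact hd
    have h3 : Ψ t * (1 + (q : ℝ) * (s / t - 1)) ≤ Ψ s :=
      (mul_le_mul_of_nonneg_left hbern hΨt).trans h2
    have e2 : (t - s) / t = 1 - s / t := by field_simp
    rw [e2]; nlinarith
  have hx0 : 0 ≤ (t - s) / t := div_nonneg (by linarith) ht.le
  have hx1 : (t - s) / t ≤ 1 := by rw [div_le_one ht]; linarith
  have h2 : ((t - s) / t) ^ 2 ≤ ((t - s) / t) ^ p := by
    rw [← Real.rpow_two]
    apply Real.rpow_le_rpow_of_exponent_ge _ hx1 hp2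
    exact div_pos (by linarith) ht
  have h3 := h.inc t M ht hM
  have htp : 0 < t ^ p := by positivity
  have hMp : 0 < M ^ p := by positivity
  have hdp : 0 ≤ (t - s) ^ p := Real.rpow_nonneg (by linarith) p
  have h4 : Ψ t * ((t - s) / t) ^ p ≤ A * Ψ M * ((t - s) / M) ^ p := by
    rw [Real.div_rpow (by linarith) ht.le, Real.div_rpow (by linarith) hM0.le, ← mul_div_assoc,
      ← mul_div_assoc, div_le_div_iff₀ htp hMp]
    nlinarith
  calc (Ψ t - Ψ s) ^ 2 ≤ (q * Ψ t * ((t - s) / t)) ^ 2 := by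
        apply pow_le_pow_left₀ (by linarith) h1
    _ = q ^ 2 * Ψ t * (Ψ t * ((t - s) / t) ^ 2) := by ring
    _ ≤ q ^ 2 * Ψ t * (Ψ t * ((t - s) / t) ^ p) := by gcongr
    _ ≤ q ^ 2 * Ψ t * (A * Ψ M * ((t - s) / M) ^ p) := by gcongr
    _ = _ := by ring

/-- two-sided increment bound. -/
theorem inc_abs (h : Reg Ψ p A q) (x y M δ : ℝ) (hx : |x| ≤ M) (hy : |y| ≤ M) (hM0 : 0 < M)
    (hδ : |x - y| ≤ δ) :
    (Ψ |x| - Ψ |y|) ^ 2 ≤ q ^ 2 * A * Ψ M * (δ / M) ^ p * (Ψ |x| + Ψ |y|) := by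
  have hΨM : 0 ≤ Ψ M := h.nonneg _ hM0.le
  have hA := h.hA
  have hp := h.hp
  have hδ0 : 0 ≤ δ := (abs_nonneg _).trans hδ
  have hΨx := h.nonneg _ (abs_nonneg x)
  have hΨy := h.nonneg _ (abs_nonneg y)
  have hxy : |(|x| - |y|)| ≤ δ := (abs_abs_sub_abs_le_abs_sub x y).trans hδ
  have key : ∀ s t : ℝ, 0 ≤ s → s ≤ t → t ≤ M → t - s ≤ δ → ∀ Z, Ψ t ≤ Z →
      (Ψ t - Ψ s) ^ 2 ≤ q ^ 2 * A * Ψ M * (δ / M) ^ p * Z := by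
    intro s t hs hst htM hts Z hZ
    refine (h.inc_lip s t M hs hst htM hM0).trans ?_
    have h0 : 0 ≤ (t - s) / M := div_nonneg (by linarith) hM0.le
    have hΨt := h.nonneg t (hs.trans hst)
    gcongr
  rcases le_total |y| |x| with hl | hl
  · exact key _ _ (abs_nonneg y) hl hx ((le_abs_self _).trans hxy) _ (by linarith)
  · rw [show (Ψ |x| - Ψ |y|) ^ 2 = (Ψ |y| - Ψ |x|) ^ 2 by ring]
    refine key _ _ (abs_nonneg x) hl hy ?_ _ (by linarith)
    rw [abs_sub_comm] at hxy
    exact (le_abs_self _).trans hxy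

theorem pow_le (h : Reg Ψ p A q) (t : ℝ) (ht : 0 ≤ t) : t ^ p ≤ 1 + A / Ψ 1 * Ψ t := by
  have h1 := h.one
  have hA := h.hA
  have hp := h.hp
  have hΨ := h.nonneg t ht
  rcases le_total t 1 with h' | h'
  · have : t ^ p ≤ 1 := Real.rpow_le_one ht h' (by linarith)
    have : 0 ≤ A / Ψ 1 * Ψ t := by positivity
    linarith
  · have := h.inc 1 t one_pos h'
    rw [Real.one_rpow, mul_one] at this
    have : t ^ p ≤ A * Ψ t / Ψ 1 := by rw [le_div_iff₀ h1]; linarith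
    have e : A * Ψ t / Ψ 1 = A / Ψ 1 * Ψ t := by ring
    linarith

/-- scaling down: Ψ(t/(A c)) ≤ Ψ(t)/c for c ≥ 1. -/
theorem scale (h : Reg Ψ p A q) (t c : ℝ) (ht : 0 ≤ t) (hc : 1 ≤ c) :
    Ψ (t / (A * c)) ≤ Ψ t / c := by
  have hA := h.hA
  have hp := h.hp
  rcases eq_or_lt_of_le ht with rfl | ht
  · simp [h.zero]
  have hAc : 1 ≤ A * c := by nlinarith
  have hΨ := h.nonneg t ht.le
  have h1 := h.inc (t / (A * c)) t (by positivity) (div_le_self ht.le hAc)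
  have htp : 0 < t ^ p := by positivity
  rw [Real.div_rpow ht.le (by linarith)] at h1
  have h2 : Ψ (t / (A * c)) ≤ A * Ψ t / (A * c) ^ p := by
    refine le_of_mul_le_mul_right (h1.trans_eq ?_) htp
    ring
  refine h2.trans ?_
  have h3 : A * c ≤ (A * c) ^ p := Real.self_le_rpow_of_one_le hAc hp.le
  rw [div_le_div_iff₀ (by positivity) (by positivity)]
  nlinarith

theorem meas (h : Reg Ψ p A q) : Measurable fun t : ℝ => Ψ |t| := by
  have h1 : Monotone fun t : ℝ => Ψ (max t 0) := fun s t hst =>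
    h.mono (Set.mem_Ici.2 (le_max_right _ _)) (Set.mem_Ici.2 (le_max_right _ _))
      (max_le_max hst le_rfl)
  have h2 := h1.measurable.comp (measurable_norm (α := ℝ))
  convert h2 using 2 with t
  simp [Real.norm_eq_abs]

end Reg

open MeasureTheory

def Gd {Ω E ι : Type*} [NormedAddCommGroup E] [InnerProductSpace ℝ E] [Fintype ι]
    (κ : Ω → E) (Ψ : ℝ → ℝ) (ρ : E → ℝ) (x : ι → Ω) (t : ℝ) : Prop :=
  (∀ v, ρ v ≤ 1 → |(∑ i, Ψ |inner ℝ v (κ (x i))|) / (Fintype.card ι : ℝ) - ρ v| ≤ t) ∧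
  (∀ v : E, ‖v‖ ≤ 1 → |(∑ i, (inner ℝ v (κ (x i))) ^ 2) / (Fintype.card ι : ℝ) - ‖v‖ ^ 2| ≤ t)

theorem Gd.equiv {Ω E ι ι' : Type*} [NormedAddCommGroup E] [InnerProductSpace ℝ E] [Fintype ι]
    [Fintype ι'] (e : ι' ≃ ι)
    {κ : Ω → E} {Ψ : ℝ → ℝ} {ρ : E → ℝ} {x : ι → Ω} {t : ℝ} (h : Gd κ Ψ ρ x t) :
    Gd κ Ψ ρ (x ∘ e) t := by
  refine ⟨fun v hv => ?_, fun v hv => ?_⟩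
  · have := h.1 v hv
    rw [← Equiv.sum_comp e, ← Fintype.card_congr e] at this
    exact this
  · have := h.2 v hv
    rw [← Equiv.sum_comp e, ← Fintype.card_congr e] at this
    exact this

theorem Gd.mono {Ω E ι : Type*} [NormedAddCommGroup E] [InnerProductSpace ℝ E] [Fintype ι]
    {κ : Ω → E} {Ψ : ℝ → ℝ} {ρ : E → ℝ} {x : ι → Ω} {t t' : ℝ} (h : Gd κ Ψ ρ x t) (htt : t ≤ t') :
    Gd κ Ψ ρ x t' :=
  ⟨fun v hv => (h.1 v hv).trans htt, fun v hv => (h.2 v hv).trans htt⟩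

theorem half_mean {ι : Type*} [Fintype ι] [Nonempty ι] (Y : ι × Bool → ℝ) (e : ι → Bool)
    (r t Δ n : ℝ) (hn : n = Fintype.card (ι × Bool))
    (h1 : |(∑ j, Y j) / n - r| ≤ t)
    (h2 : |∑ i, sgnB (e i) * (Y (i, true) - Y (i, false))| ≤ Δ) :
    |(∑ i, Y (i, e i)) / (Fintype.card ι : ℝ) - r| ≤ t + Δ / n := by
  have hc : (0 : ℝ) < Fintype.card ι := by exact_mod_cast Fintype.card_pos
  have hn2 : n = 2 * Fintype.card ι := by
    rw [hn, Fintype.card_prod, Fintype.card_bool]; push_cast; ring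
  have hn0 : 0 < n := by rw [hn2]; positivity
  have e1 : ∑ j, Y j = ∑ i, (Y (i, true) + Y (i, false)) := by
    rw [Fintype.sum_prod_type]
    refine Finset.sum_congr rfl fun i _ => ?_
    simp
  have e2 : ∑ i, sgnB (e i) * (Y (i, true) - Y (i, false)) =
      2 * ∑ i, Y (i, e i) - ∑ j, Y j := by
    rw [e1, Finset.mul_sum, ← Finset.sum_sub_distrib]
    refine Finset.sum_congr rfl fun i _ => ?_
    cases e i <;> simp [sgnB] <;> ring
  have e3 : (∑ i, Y (i, e i)) / (Fintype.card ι : ℝ) - r =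
      ((∑ j, Y j) / n - r) + (∑ i, sgnB (e i) * (Y (i, true) - Y (i, false))) / n := by
    rw [e2, hn2]; field_simp; ring
  rw [e3]
  refine (abs_add_le _ _).trans (add_le_add h1 ?_)
  rw [abs_div, abs_of_pos hn0]
  exact div_le_div_of_nonneg_right h2 hn0.le

theorem halve {Ω E ι : Type*} [NormedAddCommGroup E] [InnerProductSpace ℝ E] [FiniteDimensional ℝ E]
    [Fintype ι] [Nonempty ι]
    (κ : Ω → E) (Ψ : ℝ → ℝ) (ρ : E → ℝ) (p A M H D n t K0 : ℝ) (q N : ℕ) (hR : Reg Ψ p A q)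
    (hN1 : 1 ≤ N) (hN : Module.finrank ℝ E ≤ N) (hH : 0 < H) (hM : 0 < M)
    (hK0 : K0 = 1 + A / Ψ 1) (hMp : M ^ p = K0 * H ^ 2)
    (hρ0 : ρ 0 ≤ 1) (hκ : ∀ x, ‖κ x‖ ≤ H) (hBM : ∀ v, ρ v ≤ 1 → ∀ x, |inner ℝ v (κ x)| ≤ M)
    (hD0 : 0 < D) (hD1 : q ^ 2 * A * Ψ M ≤ D) (hD2 : 2 * H ^ 2 ≤ D)
    (hn : n = Fintype.card (ι × Bool)) (ht : t ≤ 1 / 2)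
    (x : ι × Bool → Ω) (hx : Gd κ Ψ ρ x t) :
    ∃ x' : ι → Ω, Gd κ Ψ ρ x'
      (t + 4000 * Real.logb 2 (2 * N) * Real.sqrt (D * n * Real.log (2 * n + 1)) / n) := by
  classical
  have hp := hR.hp
  have hp2 := hR.hp2
  have hA := hR.hA
  have h1Ψ := hR.one
  have hn0 : 0 < n := by rw [hn]; exact_mod_cast Fintype.card_pos
  have hK01 : 1 ≤ K0 := by rw [hK0]; have : 0 < A / Ψ 1 := by positivity
                           linarith
  obtain ⟨hx1, hx2⟩ := hx
  rw [← hn] at hx1 hx2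
  have hΨm : ∀ v, ρ v ≤ 1 → (∑ i, Ψ |inner ℝ v (κ (x i))|) ≤ 2 * n := by
    intro v hv
    have := (abs_le.1 (hx1 v hv)).2
    have h2 : (∑ i, Ψ |inner ℝ v (κ (x i))|) / n ≤ 2 := by linarith
    rwa [div_le_iff₀ hn0] at h2
  have hpm : ∀ v, ρ v ≤ 1 → (∑ i, |inner ℝ v (κ (x i))| ^ p) ≤ 2 * K0 * n := by
    intro v hv
    calc _ ≤ ∑ i, (1 + A / Ψ 1 * Ψ |inner ℝ v (κ (x i))|) :=
          Finset.sum_le_sum fun i _ => hR.pow_le _ (abs_nonneg _)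
      _ = n + A / Ψ 1 * ∑ i, Ψ |inner ℝ v (κ (x i))| := by
          rw [Finset.sum_add_distrib, ← Finset.mul_sum, hn]; simp
      _ ≤ n + A / Ψ 1 * (2 * n) := by
          have := hΨm v hv
          gcongr
      _ ≤ _ := by rw [hK0]; nlinarith
  have hl2 : ∀ v : E, ‖v‖ ^ 2 * n ≤ 2 * ∑ i, (inner ℝ v (κ (x i))) ^ 2 := by
    intro v
    rcases eq_or_ne v 0 with rfl | hv
    · simp
    have hv0 : 0 < ‖v‖ := norm_pos_iff.2 hv
    have hnv : ‖(‖v‖⁻¹ • v)‖ = 1 := by rw [norm_smul, norm_inv, norm_norm, inv_mul_cancel₀ hv0.ne']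
    have := (abs_le.1 (hx2 (‖v‖⁻¹ • v) hnv.le)).1
    rw [hnv] at this
    simp only [inner_smul_left, conj_trivial, mul_pow] at this
    rw [← Finset.mul_sum] at this
    have h3 : 1 / 2 ≤ ‖v‖⁻¹ ^ 2 * (∑ i, (inner ℝ v (κ (x i))) ^ 2) / n := by linarith
    rw [le_div_iff₀ hn0] at h3
    have h4 := mul_le_mul_of_nonneg_left h3 (sq_nonneg ‖v‖)
    rw [← mul_assoc (‖v‖ ^ 2) (‖v‖⁻¹ ^ 2), ← mul_pow, mul_inv_cancel₀ hv0.ne'] at h4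
    linarith
  obtain ⟨bad1, hb1, hg1⟩ := step_class (fun j => κ (x j)) N hN1 hN {v | ρ v ≤ 1} hρ0 p M H D n
    hp.le hp2 hM hH hD0 hn (fun j => hκ _) (fun v hv j => hBM v hv _)
    (by
      intro v hv w hw ε hε hvw
      have h1 := hl2 (v - w)
      have h2 : ∑ i, (inner ℝ (v - w) (κ (x i))) ^ 2 ≤ ε ^ (2 - p) * (4 * (2 * K0 * n + 2 * K0 * n)) := by
        calc _ ≤ ∑ i, ε ^ (2 - p) * (4 * (|inner ℝ v (κ (x i))| ^ p + |inner ℝ w (κ (x i))| ^ p)) := by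
              refine Finset.sum_le_sum fun i _ => ?_
              have h3 := hvw i
              rw [inner_sub_left] at h3 ⊢
              generalize (inner ℝ v (κ (x i)) : ℝ) = a at *
              generalize (inner ℝ w (κ (x i)) : ℝ) = b at *
              have h4 : (a - b) ^ 2 = |a - b| ^ (2 - p) * |a - b| ^ p := by
                rw [← Real.rpow_add_of_nonneg (abs_nonneg _) (by linarith) (by linarith)]
                simp
              have h5 : |a - b| ^ p ≤ 4 * (|a| ^ p + |b| ^ p) := by
                have h6 : |a - b| ≤ 2 * max |a| |b| := by
                  have := abs_sub a b
                  have := le_max_left |a| |b|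
                  have := le_max_right |a| |b|
                  linarith
                have h7 : (0:ℝ) ≤ max |a| |b| := (abs_nonneg a).trans (le_max_left _ _)
                calc |a - b| ^ p ≤ (2 * max |a| |b|) ^ p :=
                      Real.rpow_le_rpow (abs_nonneg _) h6 (by linarith)
                  _ = 2 ^ p * (max |a| |b|) ^ p := Real.mul_rpow (by norm_num) h7
                  _ ≤ 4 * (|a| ^ p + |b| ^ p) := by
                      have h8 : (2 : ℝ) ^ p ≤ 4 := by
                        calc (2 : ℝ) ^ p ≤ 2 ^ (2 : ℝ) :=
                              Real.rpow_le_rpow_of_exponent_le (by norm_num) hp2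
                          _ = 4 := by norm_num
                      have h9 : (max |a| |b|) ^ p ≤ |a| ^ p + |b| ^ p := by
                        have ha : 0 ≤ |a| ^ p := Real.rpow_nonneg (abs_nonneg _) _
                        have hb : 0 ≤ |b| ^ p := Real.rpow_nonneg (abs_nonneg _) _
                        rcases max_choice |a| |b| with h | h <;> rw [h] <;> linarith
                      have := Real.rpow_nonneg h7 p
                      gcongr
              rw [h4]
              gcongr
          _ = ε ^ (2 - p) * (4 * ((∑ i, |inner ℝ v (κ (x i))| ^ p) + ∑ i, |inner ℝ w (κ (x i))| ^ p)) := by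
              rw [← Finset.mul_sum, ← Finset.mul_sum, Finset.sum_add_distrib]
          _ ≤ _ := by
              have := hpm v hv
              have := hpm w hw
              gcongr
      have h3 : ‖v - w‖ ^ 2 ≤ 32 * K0 * ε ^ (2 - p) := by
        refine le_of_mul_le_mul_right ?_ hn0
        linarith
      have h4 : ε ^ 2 * (M / ε) ^ p = ε ^ (2 - p) * (K0 * H ^ 2) := by
        rw [Real.div_rpow hM.le hε.le, hMp, Real.rpow_sub hε, Real.rpow_two]
        ring
      calc _ ≤ 32 * K0 * ε ^ (2 - p) * H ^ 2 := by gcongr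
        _ = 32 * (ε ^ 2 * (M / ε) ^ p) := by rw [h4]; ring
        _ = _ := by ring)
    (fun v j => Ψ |inner ℝ v (κ (x j))|) (fun j => by simp [hR.zero])
    (fun v j => hR.nonneg _ (abs_nonneg _))
    (by
      intro v hv w hw δ hδ hvw j
      have h3 := hvw j
      rw [inner_sub_left] at h3
      refine (hR.inc_abs _ _ M δ (hBM v hv _) (hBM w hw _) hM h3).trans ?_
      have h4 := hR.nonneg |inner ℝ v (κ (x j))| (abs_nonneg _)
      have h5 := hR.nonneg |inner ℝ w (κ (x j))| (abs_nonneg _)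
      gcongr)
    hΨm
  obtain ⟨bad2, hb2, hg2⟩ := step_class (fun j => κ (x j)) N hN1 hN {v | ‖v‖ ≤ 1} (by simp) 2 H H D n
    (by norm_num) le_rfl hH hH hD0 hn (fun j => hκ _)
    (fun v hv j => by
      refine (abs_real_inner_le_norm _ _).trans ?_
      have := hκ (x j)
      have hv : ‖v‖ ≤ 1 := hv
      calc ‖v‖ * ‖κ (x j)‖ ≤ 1 * H := by gcongr
        _ = H := one_mul H)
    (by
      intro v hv w hw ε hε hvw
      have h4 : ε ^ 2 * (H / ε) ^ (2 : ℝ) = H ^ 2 := by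
        rw [Real.rpow_two]; field_simp
      have h5 : ‖v - w‖ ≤ 2 := by
        have := norm_sub_le v w
        have hv : ‖v‖ ≤ 1 := hv
        have hw : ‖w‖ ≤ 1 := hw
        linarith
      have h6 : ‖v - w‖ ^ 2 ≤ 2 ^ 2 := pow_le_pow_left₀ (norm_nonneg _) h5 2
      rw [mul_assoc, h4]
      have := sq_nonneg H
      nlinarith)
    (fun v j => (inner ℝ v (κ (x j))) ^ 2) (fun j => by simp) (fun v j => sq_nonneg _)
    (by
      intro v hv w hw δ hδ hvw j
      have h3 := hvw j
      rw [inner_sub_left] at h3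
      generalize (inner ℝ v (κ (x j)) : ℝ) = a at *
      generalize (inner ℝ w (κ (x j)) : ℝ) = b at *
      have h4 : (a - b) ^ 2 ≤ δ ^ 2 := sq_le_sq' (abs_le.1 h3).1 (abs_le.1 h3).2
      have h5 : (a + b) ^ 2 ≤ 2 * (a ^ 2 + b ^ 2) := by nlinarith [sq_nonneg (a - b)]
      rw [Real.rpow_two]
      calc (a ^ 2 - b ^ 2) ^ 2 = (a - b) ^ 2 * (a + b) ^ 2 := by ring
        _ ≤ δ ^ 2 * (2 * (a ^ 2 + b ^ 2)) := by gcongr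
        _ = 2 * H ^ 2 * (δ / H) ^ 2 * (a ^ 2 + b ^ 2) := by field_simp
        _ ≤ _ := by gcongr)
    (by
      intro v hv
      have := (abs_le.1 (hx2 v hv)).2
      have hv1 : ‖v‖ ^ 2 ≤ 1 := pow_le_one₀ (norm_nonneg _) hv
      rw [← div_le_iff₀ hn0]
      linarith)
  have hex : ∃ e, e ∉ bad1 ∪ bad2 := by
    by_contra! hcon
    have h1 : (bad1 ∪ bad2) = Finset.univ := Finset.eq_univ_iff_forall.2 hcon
    have h2 := Finset.card_union_le bad1 bad2
    rw [h1, Finset.card_univ, Fintype.card_fun, Fintype.card_bool] at h2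
    have h3 : ((2 : ℝ) ^ Fintype.card ι) ≤ bad1.card + bad2.card := by exact_mod_cast h2
    have h4 : (0 : ℝ) < 2 ^ Fintype.card ι := by positivity
    linarith
  obtain ⟨e, he⟩ := hex
  rw [Finset.notMem_union] at he
  refine ⟨fun i => x (i, e i), fun v hv => ?_, fun v hv => ?_⟩
  · exact half_mean (fun j => Ψ |inner ℝ v (κ (x j))|) e (ρ v) t _ n hn (hx1 v hv) (hg1 e he.1 v hv)
  · exact half_mean (fun j => (inner ℝ v (κ (x j))) ^ 2) e (‖v‖ ^ 2) t _ n hn (hx2 v hv) (hg2 e he.2 v hv)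

open MeasureTheory

theorem lln_one {Ω : Type*} [MeasurableSpace Ω] (μ : Measure Ω) [IsProbabilityMeasure μ]
    (g : Ω → ℝ) (hg : Measurable g) (hi : Integrable g μ) :
    ∀ᵐ ω ∂(Measure.infinitePi fun _ : ℕ => μ),
      Filter.Tendsto (fun n : ℕ => (∑ i ∈ Finset.range n, g (ω i)) / n) Filter.atTop
        (nhds (∫ x, g x ∂μ)) := by
  have hmp : ∀ i : ℕ, MeasurePreserving (fun ω : ℕ → Ω => ω i) (Measure.infinitePi fun _ : ℕ => μ) μ :=
    fun i => measurePreserving_eval_infinitePi (fun _ : ℕ => μ) i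
  have h := ProbabilityTheory.strong_law_ae_real (μ := Measure.infinitePi fun _ : ℕ => μ)
    (fun (i : ℕ) (ω : ℕ → Ω) => g (ω i))
    ((hmp 0).integrable_comp_of_integrable hi)
    (fun i j hij => (ProbabilityTheory.iIndepFun_infinitePi (P := fun _ : ℕ => μ)
      (X := fun _ => g) (fun _ => hg)).indepFun hij)
    (fun i => by
      have h1 : ∀ i : ℕ, Measure.map (fun ω : ℕ → Ω => g (ω i)) (Measure.infinitePi fun _ : ℕ => μ)
          = Measure.map g μ := fun i => by
        have h3 := Measure.map_map hg (hmp i).measurable (μ := Measure.infinitePi fun _ : ℕ => μ)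
        rw [(hmp i).map_eq] at h3
        exact h3.symm
      exact ⟨(hg.comp (hmp i).measurable).aemeasurable, (hg.comp (hmp 0).measurable).aemeasurable,
        by rw [h1, h1]⟩)
  have h2 : ∫ ω, g (ω 0) ∂(Measure.infinitePi fun _ : ℕ => μ) = ∫ x, g x ∂μ := by
    have h3 := integral_map (μ := Measure.infinitePi fun _ : ℕ => μ) (hmp 0).measurable.aemeasurable
      (f := g) hg.aestronglyMeasurable
    rw [(hmp 0).map_eq] at h3
    exact h3.symm
  rw [h2] at h
  exact h

theorem unif_lln {Ω E : Type*} [MeasurableSpace Ω] (μ : Measure Ω) [IsProbabilityMeasure μ]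
    [NormedAddCommGroup E] [NormedSpace ℝ E] [FiniteDimensional ℝ E] (B : Set E)
    (hB : Bornology.IsBounded B) (F : E → Ω → ℝ) (hF : ∀ v ∈ B, Measurable (F v))
    (hFi : ∀ v ∈ B, Integrable (F v) μ)
    (hc : ∀ ε > 0, ∃ δ > 0, ∀ v ∈ B, ∀ w ∈ B, ‖v - w‖ < δ → ∀ x, |F v x - F w x| ≤ ε)
    (τ : ℝ) (hτ : 0 < τ) :
    ∀ᵐ ω ∂(Measure.infinitePi fun _ : ℕ => μ), ∀ᶠ n : ℕ in Filter.atTop,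
      ∀ v ∈ B, |(∑ i ∈ Finset.range n, F v (ω i)) / n - ∫ x, F v x ∂μ| ≤ τ := by
  have : ProperSpace E := FiniteDimensional.proper_real E
  obtain ⟨δ, hδ, hcδ⟩ := hc (τ / 4) (by linarith)
  obtain ⟨t, htB, htf, hcov⟩ := Metric.finite_approx_of_totallyBounded
    ((Bornology.IsBounded.isCompact_closure hB).totallyBounded.subset subset_closure) δ hδ
  have h1 : ∀ᵐ ω ∂(Measure.infinitePi fun _ : ℕ => μ), ∀ v ∈ t,
      Filter.Tendsto (fun n : ℕ => (∑ i ∈ Finset.range n, F v (ω i)) / n) Filter.atTop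
        (nhds (∫ x, F v x ∂μ)) := by
    rw [ae_ball_iff htf.countable]
    exact fun v hv => lln_one μ (F v) (hF v (htB hv)) (hFi v (htB hv))
  filter_upwards [h1] with ω hω
  have h2 : ∀ᶠ n : ℕ in Filter.atTop, ∀ v ∈ t,
      |(∑ i ∈ Finset.range n, F v (ω i)) / n - ∫ x, F v x ∂μ| < τ / 4 := by
    rw [Filter.eventually_all_finite htf]
    intro v hv
    have := (Metric.tendsto_nhds.1 (hω v hv)) (τ / 4) (by linarith)
    simpa [Real.dist_eq] using this
  filter_upwards [h2, Filter.eventually_gt_atTop 0] with n hn hn0 v hv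
  have hn0' : (0 : ℝ) < n := by exact_mod_cast hn0
  obtain ⟨w, hw, hvw⟩ := Set.mem_iUnion₂.1 (hcov hv)
  rw [Metric.mem_ball, dist_eq_norm] at hvw
  have h3 := hcδ v hv w (htB hw) hvw
  have h4 : |(∑ i ∈ Finset.range n, F v (ω i)) / n - (∑ i ∈ Finset.range n, F w (ω i)) / n| ≤ τ / 4 := by
    rw [← sub_div, ← Finset.sum_sub_distrib, abs_div, abs_of_pos hn0', div_le_iff₀ hn0']
    refine (Finset.abs_sum_le_sum_abs _ _).trans ?_
    refine (Finset.sum_le_sum fun i _ => h3 (ω i)).trans_eq ?_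
    simp [mul_comm]
  have h5 : |∫ x, F v x ∂μ - ∫ x, F w x ∂μ| ≤ τ / 4 := by
    rw [← integral_sub (hFi v hv) (hFi w (htB hw))]
    have := norm_integral_le_of_norm_le_const (μ := μ) (f := fun x => F v x - F w x) (C := τ / 4)
      (Filter.Eventually.of_forall fun x => h3 x)
    simpa using this
  have h6 := hn w hw
  rw [abs_le] at h4 h5 ⊢
  rw [abs_lt] at h6
  constructor <;> linarith

open MeasureTheory

theorem num1 (W η τ l D : ℝ) (hl : 0 ≤ l) (hD : 0 ≤ D) (hW : W = D * l ^ 2) (hτ : 0 < τ)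
    (hη : η = τ ^ 2 / (2 * 16 ^ 2 * 4000 ^ 2)) (m : ℝ) (hm : 1 ≤ m)
    (h : W * Real.log (2 * m + 1) ≤ η * m) (k : ℕ) (n : ℝ) (hn : n = 2 ^ (k + 1) * m) :
    4000 * l * Real.sqrt (D * n * Real.log (2 * n + 1)) / n ≤ τ / 16 * (7 / 8) ^ k := by
  have hn0 : 0 < n := by rw [hn]; positivity
  have h2 : (0 : ℝ) < 2 ^ (k + 1) := by positivity
  have hlm : 1 ≤ Real.log (2 * m + 1) := by
    rw [Real.le_log_iff_exp_le (by linarith)]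
    have := Real.exp_one_lt_d9
    linarith
  have hlog : Real.log (2 * n + 1) ≤ 2 * (k + 1) * Real.log (2 * m + 1) := by
    have h3 : 2 * n + 1 ≤ 2 ^ (k + 1) * (2 * m + 1) := by
      rw [hn]
      have : (1 : ℝ) ≤ 2 ^ (k + 1) := one_le_pow₀ (by norm_num)
      nlinarith
    have h4 := Real.log_le_log (by linarith) h3
    rw [Real.log_mul h2.ne' (by linarith), Real.log_pow] at h4
    have h5 : Real.log 2 ≤ 1 := by have := Real.log_two_lt_d9; linarith
    push_cast at h4
    have hk : (0 : ℝ) ≤ k := Nat.cast_nonneg k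
    have h6 : ((k : ℝ) + 1) * Real.log 2 ≤ (k + 1) * Real.log (2 * m + 1) := by
      gcongr; linarith
    nlinarith
  have hg := geo_bound k
  rw [div_le_iff₀ hn0]
  have hln : 0 ≤ Real.log (2 * n + 1) := Real.log_nonneg (by linarith)
  have key : 4000 ^ 2 * l ^ 2 * (D * n * Real.log (2 * n + 1)) ≤ (τ / 16 * (7 / 8) ^ k * n) ^ 2 := by
    have e1 : (2 : ℝ) ^ (k + 1) * (1 / 2) ^ k = 2 := by
      rw [pow_succ, mul_assoc, mul_comm 2, ← mul_assoc, ← mul_pow]; norm_num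
    have hk : (0 : ℝ) ≤ (k : ℝ) + 1 := by positivity
    calc 4000 ^ 2 * l ^ 2 * (D * n * Real.log (2 * n + 1))
        ≤ 4000 ^ 2 * l ^ 2 * (D * n * (2 * (k + 1) * Real.log (2 * m + 1))) := by gcongr
      _ = 4000 ^ 2 * 2 * (k + 1) * n * (W * Real.log (2 * m + 1)) := by rw [hW]; ring
      _ ≤ 4000 ^ 2 * 2 * (k + 1) * n * (η * m) := by gcongr
      _ = 4000 ^ 2 * (2 ^ (k + 1) * (1 / 2) ^ k) * (k + 1) * n * (η * m) := by rw [e1]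
      _ = 4000 ^ 2 * η * n ^ 2 * ((k + 1) * (1 / 2) ^ k) := by rw [hn]; ring
      _ ≤ 4000 ^ 2 * η * n ^ 2 * (2 * ((7 / 8) ^ k) ^ 2) := by
          have : 0 ≤ η := by rw [hη]; positivity
          gcongr
      _ = _ := by rw [hη]; ring
  have e2 : 4000 * l * Real.sqrt (D * n * Real.log (2 * n + 1)) =
      Real.sqrt (4000 ^ 2 * l ^ 2 * (D * n * Real.log (2 * n + 1))) := by
    rw [← mul_pow, Real.sqrt_mul (sq_nonneg (4000 * l)), Real.sqrt_sq (by positivity)]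
  rw [e2]
  exact Real.sqrt_le_iff.2 ⟨by positivity, key⟩

theorem num2 (C3 η : ℝ) (hC3 : 0 ≤ C3) (hη : 0 < η) : ∃ C0 : ℝ, 0 < C0 ∧
    ∀ W Λ m : ℝ, 0 < W → 1 ≤ Λ → 1 ≤ m → Real.log W ≤ C3 * Λ → C0 * W * Λ ≤ m →
      W * Real.log (2 * m + 1) ≤ η * m := by
  set s := max 1 ((C3 + 6) / η) with hs
  have hs1 : 1 ≤ s := le_max_left _ _
  have hs2 : C3 + 6 ≤ η * s := by
    have := le_max_right 1 ((C3 + 6) / η)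
    rw [← hs, div_le_iff₀ hη] at this
    linarith
  refine ⟨s ^ 2, by positivity, fun W Λ m hW hΛ hm hlW hle => ?_⟩
  have hX : 0 < s ^ 2 * W * Λ := by positivity
  set r := m / (s ^ 2 * W * Λ) with hr
  have hr1 : 1 ≤ r := by rw [hr, one_le_div hX]; exact hle
  have hmr : m = 3⁻¹ * (3 * s ^ 2 * W * Λ * r) := by rw [hr]; field_simp
  have hlog : Real.log (2 * m + 1) ≤ Real.log 3 + 2 * Real.log s + Real.log W + Real.log Λ + Real.log r := by
    have h1 : 2 * m + 1 ≤ 3 * s ^ 2 * W * Λ * r := by linarith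
    have h2 := Real.log_le_log (by linarith) h1
    have hs0 : s ≠ 0 := by linarith
    have hr0 : r ≠ 0 := by linarith
    have hΛ0 : Λ ≠ 0 := by linarith
    rw [Real.log_mul (by positivity) hr0, Real.log_mul (by positivity) hΛ0,
      Real.log_mul (by positivity) hW.ne', Real.log_mul (by norm_num) (by positivity),
      Real.log_pow] at h2
    exact_mod_cast h2
  have l3 : Real.log 3 ≤ 2 := by
    have := Real.log_le_sub_one_of_pos (by norm_num : (0:ℝ) < 3); linarith
  have ls : Real.log s ≤ s - 1 := Real.log_le_sub_one_of_pos (by linarith)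
  have lΛ : Real.log Λ ≤ Λ - 1 := Real.log_le_sub_one_of_pos (by linarith)
  have lr : Real.log r ≤ r - 1 := Real.log_le_sub_one_of_pos (by linarith)
  have hΛr : 1 ≤ Λ * r := by nlinarith
  have hΛr1 : Λ ≤ Λ * r := by nlinarith
  have hΛr2 : r ≤ Λ * r := by nlinarith
  have h4 : Real.log (2 * m + 1) ≤ (C3 + 6) * s * (Λ * r) := by
    have a1 : Real.log (2 * m + 1) ≤ 2 * s + C3 * Λ + Λ + r := by linarith
    have a2 : 2 * s ≤ 2 * s * (Λ * r) := by nlinarith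
    have a3 : C3 * Λ ≤ C3 * s * (Λ * r) := by
      have : Λ ≤ s * (Λ * r) := by nlinarith
      nlinarith
    have a4 : Λ * r ≤ s * (Λ * r) := by nlinarith
    nlinarith
  have h5 : (C3 + 6) * s * (Λ * r) ≤ η * s * s * (Λ * r) := by
    have : 0 ≤ s * (Λ * r) := by positivity
    nlinarith
  calc W * Real.log (2 * m + 1) ≤ W * (η * s * s * (Λ * r)) := by gcongr; linarith
    _ = η * m := by rw [hmr]; ring

open MeasureTheory

section
variable {Ω E : Type*} [MeasurableSpace Ω] (μ : Measure Ω) [IsProbabilityMeasure μ]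
    [NormedAddCommGroup E] [InnerProductSpace ℝ E] [FiniteDimensional ℝ E]

theorem inner_bd (κ : Ω → E) (H : ℝ) (hκ : ∀ x, ‖κ x‖ ≤ H) (v : E) (x : Ω) :
    |inner ℝ v (κ x)| ≤ H * ‖v‖ := by
  refine (abs_real_inner_le_norm _ _).trans ?_
  have := hκ x
  rw [mul_comm]
  gcongr

theorem int_psi {Ψ : ℝ → ℝ} {p A : ℝ} {q : ℕ} (hR : Reg Ψ p A q) (f : Ω → ℝ) (hf : Measurable f)
    (C : ℝ) (hC : ∀ x, |f x| ≤ C) : Integrable (fun x => Ψ |f x|) μ := by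
  refine Integrable.of_bound (hR.meas.comp hf).aestronglyMeasurable (Ψ C)
    (Filter.Eventually.of_forall fun x => ?_)
  have h0 := hR.nonneg _ (abs_nonneg (f x))
  rw [Real.norm_eq_abs]
  rw [abs_of_nonneg h0]
  exact hR.mono (Set.mem_Ici.2 (abs_nonneg _)) (Set.mem_Ici.2 ((abs_nonneg _).trans (hC x))) (hC x)

theorem norm_bd {Ψ : ℝ → ℝ} {p A : ℝ} {q : ℕ} (hR : Reg Ψ p A q) (κ : Ω → E) (H M K0 : ℝ)
    (hH : 1 ≤ H) (hM : 0 < M) (hK0 : K0 = 1 + A / Ψ 1) (hMp : M ^ p = K0 * H ^ 2)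
    (hκ : ∀ x, ‖κ x‖ ≤ H) (hmeas : ∀ v : E, Measurable fun x => (inner ℝ v (κ x) : ℝ))
    (hL2 : ∀ v : E, ∫ x, (inner ℝ v (κ x)) ^ 2 ∂μ = ‖v‖ ^ 2) (v : E)
    (hv : ∫ x, Ψ |inner ℝ v (κ x)| ∂μ ≤ 1) : H * ‖v‖ ≤ M := by
  have hp := hR.hp
  have hp2 := hR.hp2
  rcases eq_or_ne v 0 with rfl | hv0
  · simp [hM.le]
  have hs : 0 < ‖v‖ := norm_pos_iff.2 hv0
  have hHs : 0 < H * ‖v‖ := by positivity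
  have hAΨ : 0 ≤ A / Ψ 1 := div_nonneg (by linarith [hR.hA]) hR.one.le
  have hi := int_psi μ hR (fun x => inner ℝ v (κ x)) (hmeas v) _ (inner_bd κ H hκ v)
  have h1 : ‖v‖ ^ 2 ≤ (H * ‖v‖) ^ (2 - p) * K0 := by
    rw [← hL2 v]
    calc ∫ x, (inner ℝ v (κ x)) ^ 2 ∂μ
        ≤ ∫ x, (H * ‖v‖) ^ (2 - p) * (1 + A / Ψ 1 * Ψ |inner ℝ v (κ x)|) ∂μ := by
          refine integral_mono_of_nonneg (Filter.Eventually.of_forall fun x => sq_nonneg _) ?_ ?_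
          · exact ((integrable_const 1).add (hi.const_mul _)).const_mul _
          · refine Filter.Eventually.of_forall fun x => ?_
            have h3 := inner_bd κ H hκ v x
            simp only
            generalize (inner ℝ v (κ x) : ℝ) = a at *
            have h4 : a ^ 2 = |a| ^ (2 - p) * |a| ^ p := by
              rw [← Real.rpow_add_of_nonneg (abs_nonneg _) (by linarith) (by linarith)]
              simp
            rw [h4]
            have := hR.pow_le |a| (abs_nonneg _)
            gcongr
      _ = (H * ‖v‖) ^ (2 - p) * (1 + A / Ψ 1 * ∫ x, Ψ |inner ℝ v (κ x)| ∂μ) := by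
          rw [integral_const_mul, integral_add (integrable_const 1) (hi.const_mul _),
            integral_const_mul]
          simp
      _ ≤ _ := by
          rw [hK0]
          gcongr
          nlinarith
  have h2 : (H * ‖v‖) ^ p ≤ M ^ p := by
    have e : (H * ‖v‖) ^ 2 = (H * ‖v‖) ^ (2 - p) * (H * ‖v‖) ^ p := by
      rw [← Real.rpow_add hHs]; simp
    have h3 : (H * ‖v‖) ^ (2 - p) * (H * ‖v‖) ^ p ≤ (H * ‖v‖) ^ (2 - p) * M ^ p := by
      rw [← e, hMp]
      have := sq_nonneg H
      nlinarith
    exact le_of_mul_le_mul_left h3 (by positivity)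
  exact (Real.rpow_le_rpow_iff hHs.le hM.le (by linarith)).1 h2

theorem dim_bd (κ : Ω → E) (H : ℝ) 
    (hκ : ∀ x, ‖κ x‖ ≤ H) (hmeas : ∀ v : E, Measurable fun x => (inner ℝ v (κ x) : ℝ))
    (hL2 : ∀ v : E, ∫ x, (inner ℝ v (κ x)) ^ 2 ∂μ = ‖v‖ ^ 2) :
    (Module.finrank ℝ E : ℝ) ≤ H ^ 2 := by
  let b := stdOrthonormalBasis ℝ E
  have hi : ∀ v : E, Integrable (fun x => (inner ℝ v (κ x) : ℝ) ^ 2) μ := fun v => by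
    refine Integrable.of_bound ((hmeas v).pow_const 2).aestronglyMeasurable ((H * ‖v‖) ^ 2)
      (Filter.Eventually.of_forall fun x => ?_)
    rw [norm_pow, Real.norm_eq_abs]
    exact pow_le_pow_left₀ (abs_nonneg _) (inner_bd κ H hκ v x) 2
  calc (Module.finrank ℝ E : ℝ) = ∑ i, ∫ x, (inner ℝ (b i) (κ x)) ^ 2 ∂μ := by
        simp [hL2]
    _ = ∫ x, ∑ i, (inner ℝ (b i) (κ x)) ^ 2 ∂μ := (integral_finsetSum _ fun i _ => hi _).symm
    _ ≤ ∫ x, H ^ 2 ∂μ := by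
        refine integral_mono (integrable_finsetSum _ fun i _ => hi _) (integrable_const _) fun x => ?_
        have := b.sum_sq_norm_inner_right (κ x)
        simp only [Real.norm_eq_abs, sq_abs] at this
        simp only
        rw [this]
        exact pow_le_pow_left₀ (norm_nonneg _) (hκ x) 2
    _ = H ^ 2 := by simp

theorem init {Ψ : ℝ → ℝ} {p A : ℝ} {q : ℕ} (hR : Reg Ψ p A q) (κ : Ω → E) (H M K0 : ℝ)
    (hH : 1 ≤ H) (hM : 0 < M) (hK0 : K0 = 1 + A / Ψ 1) (hMp : M ^ p = K0 * H ^ 2)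
    (hκ : ∀ x, ‖κ x‖ ≤ H) (hmeas : ∀ v : E, Measurable fun x => (inner ℝ v (κ x) : ℝ))
    (hL2 : ∀ v : E, ∫ x, (inner ℝ v (κ x)) ^ 2 ∂μ = ‖v‖ ^ 2) (τ : ℝ) (hτ : 0 < τ) (m : ℕ) (hm : 1 ≤ m) :
    ∃ K : ℕ, ∃ x : Fin (2 ^ K * m) → Ω, Gd κ Ψ (fun v => ∫ x, Ψ |inner ℝ v (κ x)| ∂μ) x τ := by
  have hp := hR.hp
  have hA := hR.hA
  have hnb := norm_bd μ hR κ H M K0 hH hM hK0 hMp hκ hmeas hL2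
  have hΨM := hR.nonneg M hM.le
  have h1 := unif_lln μ {v : E | ∫ x, Ψ |inner ℝ v (κ x)| ∂μ ≤ 1}
    (by
      refine (Metric.isBounded_closedBall (x := (0 : E)) (r := M)).subset fun v hv => ?_
      rw [mem_closedBall_zero_iff]
      have := hnb v hv
      have := norm_nonneg v
      nlinarith)
    (fun v x => Ψ |inner ℝ v (κ x)|) (fun v _ => hR.meas.comp (hmeas v))
    (fun v _ => int_psi μ hR _ (hmeas v) _ (inner_bd κ H hκ v))
    (by
      intro ε hε
      set D' := q ^ 2 * A * Ψ M * (2 * Ψ M) with hD'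
      have hD0 : 0 ≤ D' := by positivity
      set y := min 1 (ε ^ 2 / (D' + 1)) with hy
      have hy0 : 0 < y := by positivity
      have hy1 : y ≤ 1 := min_le_left _ _
      have hy2 : D' * y ≤ ε ^ 2 := by
        have : y ≤ ε ^ 2 / (D' + 1) := min_le_right _ _
        rw [le_div_iff₀ (by positivity)] at this
        nlinarith
      refine ⟨M / H * y, by positivity, fun v hv w hw hvw x => ?_⟩
      have h3 : |inner ℝ v (κ x) - inner ℝ w (κ x)| ≤ M * y := by
        rw [← inner_sub_left]
        refine (inner_bd κ H hκ _ x).trans ?_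
        calc H * ‖v - w‖ ≤ H * (M / H * y) := by gcongr
          _ = M * y := by field_simp
      have bv := (inner_bd κ H hκ v x).trans (hnb v hv)
      have bw := (inner_bd κ H hκ w x).trans (hnb w hw)
      have h4 := hR.inc_abs _ _ M (M * y) bv bw hM h3
      have e : M * y / M = y := by field_simp
      rw [e] at h4
      have h5 : y ^ p ≤ y := by
        calc y ^ p ≤ y ^ (1 : ℝ) := Real.rpow_le_rpow_of_exponent_ge hy0 hy1 hp.le
          _ = y := Real.rpow_one y
      have m1 : Ψ |inner ℝ v (κ x)| ≤ Ψ M := hR.mono (Set.mem_Ici.2 (abs_nonneg _)) hM.le bv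
      have m2 : Ψ |inner ℝ w (κ x)| ≤ Ψ M := hR.mono (Set.mem_Ici.2 (abs_nonneg _)) hM.le bw
      have n1 := hR.nonneg _ (abs_nonneg (inner ℝ v (κ x)))
      have n2 := hR.nonneg _ (abs_nonneg (inner ℝ w (κ x)))
      apply abs_le_of_sq_le_sq _ hε.le
      calc _ ≤ _ := h4
        _ ≤ q ^ 2 * A * Ψ M * y * (2 * Ψ M) := by
            gcongr
            linarith
        _ = D' * y := by rw [hD']; ring
        _ ≤ _ := hy2)
    τ hτ
  have h2 := unif_lln μ {v : E | ‖v‖ ≤ 1}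
    (by
      refine (Metric.isBounded_closedBall (x := (0 : E)) (r := 1)).subset fun v hv => ?_
      rw [mem_closedBall_zero_iff]
      exact hv)
    (fun v x => (inner ℝ v (κ x)) ^ 2) (fun v _ => (hmeas v).pow_const 2)
    (fun v _ => by
      refine Integrable.of_bound ((hmeas v).pow_const 2).aestronglyMeasurable ((H * ‖v‖) ^ 2)
        (Filter.Eventually.of_forall fun x => ?_)
      rw [norm_pow, Real.norm_eq_abs]
      exact pow_le_pow_left₀ (abs_nonneg _) (inner_bd κ H hκ v x) 2)
    (by
      intro ε hε
      refine ⟨ε / (2 * H ^ 2), by positivity, fun v hv w hw hvw x => ?_⟩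
      have hv : ‖v‖ ≤ 1 := hv
      have hw : ‖w‖ ≤ 1 := hw
      have e : (inner ℝ v (κ x) : ℝ) ^ 2 - (inner ℝ w (κ x)) ^ 2 =
          inner ℝ (v - w) (κ x) * inner ℝ (v + w) (κ x) := by
        rw [inner_sub_left, inner_add_left]; ring
      rw [e, abs_mul]
      have a1 := inner_bd κ H hκ (v - w) x
      have a2 := inner_bd κ H hκ (v + w) x
      have a3 : ‖v + w‖ ≤ 2 := (norm_add_le _ _).trans (by linarith)
      calc _ ≤ (H * (ε / (2 * H ^ 2))) * (H * 2) := by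
            refine mul_le_mul (a1.trans ?_) (a2.trans ?_) (abs_nonneg _) (by positivity)
            · gcongr
            · gcongr
        _ = ε := by field_simp)
    τ hτ
  obtain ⟨ω, hω1, hω2⟩ := (h1.and h2).exists
  obtain ⟨n0, hn0⟩ := Filter.eventually_atTop.1 (hω1.and hω2)
  have hbig : n0 ≤ 2 ^ n0 * m := by
    have : n0 < 2 ^ n0 := Nat.lt_two_pow_self
    nlinarith
  obtain ⟨g1, g2⟩ := hn0 _ hbig
  refine ⟨n0, fun i => ω i, fun v hv => ?_, fun v hv => ?_⟩
  · have := g1 v hv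
    rw [Finset.sum_range] at this
    simpa using this
  · have := g2 v hv
    rw [Finset.sum_range, hL2] at this
    simpa using this

end

set_option maxHeartbeats 1000000 in
theorem core {Ψ : ℝ → ℝ} {p A : ℝ} {q : ℕ} (hR : Reg Ψ p A q) (K0 τ : ℝ) (hK0 : K0 = 1 + A / Ψ 1)
    (hτ : 0 < τ) (hτ2 : τ ≤ 1 / 2) :
    ∃ C : ℝ, 0 < C ∧ ∀ (Ω E : Type) [MeasurableSpace Ω] (μ : Measure Ω) [IsProbabilityMeasure μ]
    [NormedAddCommGroup E] [InnerProductSpace ℝ E] [FiniteDimensional ℝ E]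
    (κ : Ω → E) (H M : ℝ) (N : ℕ), 1 ≤ N → Module.finrank ℝ E = N → 
    1 ≤ H → 0 < M → M ^ p = K0 * H ^ 2 →
    (∀ x, ‖κ x‖ ≤ H) → (∀ v : E, Measurable fun x => (inner ℝ v (κ x) : ℝ)) →
    (∀ v : E, ∫ x, (inner ℝ v (κ x)) ^ 2 ∂μ = ‖v‖ ^ 2) → ∀ m : ℕ, 1 ≤ m →
    C * Ψ M * (Real.logb 2 (2 * N)) ^ 2 * Real.logb 2 (2 * H ^ 2) ≤ (m : ℝ) →
    ∃ x : Fin m → Ω, ∀ v : E, ∫ x, Ψ |inner ℝ v (κ x)| ∂μ ≤ 1 →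
      |(∑ i, Ψ |inner ℝ v (κ (x i))|) / (m : ℝ) - ∫ x, Ψ |inner ℝ v (κ x)| ∂μ| ≤ τ := by
  have hp := hR.hp
  have hA := hR.hA
  have hΨ1 := hR.one
  have hK01 : 1 ≤ K0 := by
    rw [hK0]
    have : 0 < A / Ψ 1 := by positivity
    linarith
  set C9 : ℝ := q ^ 2 * A + 2 * (A / Ψ 1) with hC9
  have hC90 : 0 < C9 := by positivity
  set C10 : ℝ := max 1 (4 * C9 * Ψ 1 * K0 ^ q) with hC10
  have hC101 : 1 ≤ C10 := le_max_left _ _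
  set C3 : ℝ := Real.log C10 + (q + 2) with hC3
  have hC30 : 0 ≤ C3 := by
    have := Real.log_nonneg hC101
    positivity
  set η : ℝ := τ ^ 2 / (2 * 16 ^ 2 * 4000 ^ 2) with hη
  obtain ⟨C0, hC0, hnum⟩ := num2 C3 η hC30 (by positivity)
  refine ⟨C0 * C9, by positivity, ?_⟩
  intro Ω E _ μ _ _ _ _ κ H M N hN1 hfin hH hM hMp hκ hmeas hL2 m hm hmC
  set l := Real.logb 2 (2 * N) with hl
  set Λ := Real.logb 2 (2 * H ^ 2) with hΛ
  have hNr : (1 : ℝ) ≤ N := by exact_mod_cast hN1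
  have hl1 : 1 ≤ l := by
    rw [hl, Real.le_logb_iff_rpow_le (by norm_num) (by positivity), Real.rpow_one]
    linarith
  have hH2 : 1 ≤ H ^ 2 := one_le_pow₀ hH
  have hΛ1 : 1 + Real.log (H ^ 2) ≤ Λ := by
    rw [hΛ, Real.logb_mul (by norm_num) (by positivity), Real.logb_self_eq_one (by norm_num)]
    have h2 : Real.log 2 ≤ 1 := by have := Real.log_two_lt_d9; linarith
    have h3 : 0 < Real.log 2 := Real.log_pos (by norm_num)
    have h4 := Real.log_nonneg hH2
    gcongr
    rw [Real.logb, le_div_iff₀ h3]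
    nlinarith
  have hlH := Real.log_nonneg hH2
  have hNH : (N : ℝ) ≤ H ^ 2 := by rw [← hfin]; exact dim_bd μ κ H hκ hmeas hL2
  have hM1 : 1 ≤ M := by
    by_contra! hcon
    have h2 : M ^ p < 1 := Real.rpow_lt_one hM.le hcon (by linarith)
    rw [hMp] at h2
    nlinarith
  have hΨM : Ψ 1 ≤ Ψ M := hR.mono (Set.mem_Ici.2 zero_le_one) hM.le hM1
  have hΨM0 : 0 < Ψ M := by linarith
  set D := C9 * Ψ M with hD
  have hD0 : 0 < D := by positivity
  have hD1 : q ^ 2 * A * Ψ M ≤ D := by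
    rw [hD, hC9]
    have h2 : 0 ≤ 2 * (A / Ψ 1) * Ψ M := by positivity
    have e : (q ^ 2 * A + 2 * (A / Ψ 1)) * Ψ M = q ^ 2 * A * Ψ M + 2 * (A / Ψ 1) * Ψ M := by ring
    linarith
  have hD2 : 2 * H ^ 2 ≤ D := by
    have h2 := hR.inc 1 M one_pos hM1
    rw [Real.one_rpow, mul_one, hMp] at h2
    have h3 : H ^ 2 ≤ A / Ψ 1 * Ψ M := by
      rw [div_mul_eq_mul_div, le_div_iff₀ hΨ1]
      have : H ^ 2 * Ψ 1 ≤ Ψ 1 * (K0 * H ^ 2) := by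
        have : 0 ≤ Ψ 1 * H ^ 2 := by positivity
        nlinarith
      linarith
    rw [hD, hC9]
    have h4 : 0 ≤ q ^ 2 * A * Ψ M := by positivity
    have e : (q ^ 2 * A + 2 * (A / Ψ 1)) * Ψ M = q ^ 2 * A * Ψ M + 2 * (A / Ψ 1 * Ψ M) := by ring
    linarith
  set W := D * l ^ 2 with hW
  have hW0 : 0 < W := by positivity
  have hWle : W ≤ C10 * (H ^ 2) ^ (q + 2) := by
    have h2 : Ψ M ≤ Ψ 1 * M ^ q := by
      have := hR.dec 1 M one_pos hM1
      simpa using this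
    have h3 : M ^ q ≤ (K0 * H ^ 2) ^ q := by
      apply pow_le_pow_left₀ hM.le
      rw [← hMp]
      exact Real.self_le_rpow_of_one_le hM1 hp.le
    have h4 : l ≤ 2 * H ^ 2 := by
      have h5 : l ≤ 2 * N := by
        rw [hl, Real.logb_le_iff_le_rpow (by norm_num) (by positivity)]
        have := (Nat.lt_two_pow_self (n := 2 * N)).le
        have h6 : ((2 * N : ℕ) : ℝ) ≤ 2 ^ (2 * N) := by exact_mod_cast this
        rw [← Real.rpow_natCast] at h6
        push_cast at h6
        exact h6
      linarith
    calc W = C9 * Ψ M * l ^ 2 := rfl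
      _ ≤ C9 * (Ψ 1 * (K0 * H ^ 2) ^ q) * (2 * H ^ 2) ^ 2 := by
          have := h2.trans (mul_le_mul_of_nonneg_left h3 hΨ1.le)
          gcongr
      _ = (4 * C9 * Ψ 1 * K0 ^ q) * (H ^ 2) ^ (q + 2) := by
          rw [mul_pow, pow_add]; ring
      _ ≤ _ := by
          have := le_max_right 1 (4 * C9 * Ψ 1 * K0 ^ q)
          gcongr
  have hlogW : Real.log W ≤ C3 * Λ := by
    have h2 := Real.log_le_log hW0 hWle
    have e : Real.log (C10 * (H ^ 2) ^ (q + 2)) = Real.log C10 + ((q : ℝ) + 2) * Real.log (H ^ 2) := by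
      rw [Real.log_mul (by positivity) (by positivity), Real.log_pow]
      push_cast
      ring
    rw [e] at h2
    have h3 := Real.log_nonneg hC101
    have h4 : Real.log C10 ≤ Real.log C10 * Λ := by nlinarith
    have h5 : ((q : ℝ) + 2) * Real.log (H ^ 2) ≤ (q + 2) * Λ := by gcongr; linarith
    rw [hC3]
    linarith
  have hmr : (1 : ℝ) ≤ m := by exact_mod_cast hm
  have hstep := num1 W η τ l D (by linarith) hD0.le rfl hτ hη m hmr
    (hnum W Λ m hW0 (by linarith) hmr hlogW (by rw [hW, hD]; linarith))
  set ρ : E → ℝ := fun v => ∫ x, Ψ |inner ℝ v (κ x)| ∂μ with hρ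
  obtain ⟨K, x0, hx0⟩ := init μ hR κ H M K0 hH hM hK0 hMp hκ hmeas hL2 (τ / 2) (by linarith) m hm
  have hind : ∀ k ≤ K, ∃ x : Fin (2 ^ (K - k) * m) → Ω,
      Gd κ Ψ ρ x (τ / 2 + τ / 2 * (7 / 8) ^ (K - k)) := by
    intro k
    induction k with
    | zero =>
      intro _
      refine ⟨x0, hx0.mono ?_⟩
      have : (0 : ℝ) ≤ τ / 2 * (7 / 8) ^ (K - 0) := by positivity
      linarith
    | succ k ih =>
      intro hk
      have ih2 := ih (by omega)
      set j := K - (k + 1) with hj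
      have hjk : K - k = j + 1 := by omega
      rw [hjk] at ih2
      obtain ⟨x, hx⟩ := ih2
      have hcard : Fintype.card (Fin (2 ^ j * m) × Bool) = 2 ^ (j + 1) * m := by
        simp [pow_succ]; ring
      let e : Fin (2 ^ j * m) × Bool ≃ Fin (2 ^ (j + 1) * m) :=
        Fintype.equivOfCardEq (by rw [hcard, Fintype.card_fin])
      have : Nonempty (Fin (2 ^ j * m)) := ⟨⟨0, by positivity⟩⟩
      have h78 : (7 / 8 : ℝ) ^ (j + 1) ≤ 1 := pow_le_one₀ (by norm_num) (by norm_num)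
      have h78' : (0 : ℝ) < (7 / 8 : ℝ) ^ j := by positivity
      obtain ⟨x', hx'⟩ := halve κ Ψ ρ p A M H D (2 ^ (j + 1) * m) (τ / 2 + τ / 2 * (7 / 8) ^ (j + 1)) K0 q N
        hR hN1 hfin.le (by linarith) hM hK0 hMp (by simp [hρ, hR.zero]) hκ
        (fun v hv x => (inner_bd κ H hκ v x).trans
          (norm_bd μ hR κ H M K0 hH hM hK0 hMp hκ hmeas hL2 v hv))
        hD0 hD1 hD2 (by rw [hcard]; push_cast; ring) (by
          have := mul_le_mul_of_nonneg_left h78 (by linarith : 0 ≤ τ / 2)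
          linarith) (x ∘ e) (hx.equiv e)
      refine ⟨x', hx'.mono ?_⟩
      have := hstep j _ rfl
      rw [← hl]
      rw [pow_succ]
      linarith
  have hKK := hind K le_rfl
  rw [Nat.sub_self] at hKK
  obtain ⟨x, hx⟩ := hKK
  have hm' : 2 ^ 0 * m = m := by simp
  refine ⟨fun i => x (Fin.cast hm'.symm i), fun v hv => ?_⟩
  have h1 := (hx.equiv (finCongr hm'.symm)).1 v hv
  rw [Fintype.card_fin] at h1
  refine le_trans h1 ?_
  norm_num

open MeasureTheory

theorem rep_space_aux (Ω : Type) [MetricSpace Ω] [CompactSpace Ω] [MeasurableSpace Ω] [BorelSpace Ω]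
    (μ : Measure Ω) (N : ℕ) (H : ℝ) (hH : 1 ≤ H)
    (F : Type) [AddCommGroup F] [Module ℝ F] (ι : F →ₗ[ℝ] (Ω → ℝ)) (hc : ∀ f, Continuous (ι f))
    (hfin : Module.finrank ℝ F = N) (this : FiniteDimensional ℝ F)
    (hNI : ∀ f, ∀ x, |ι f x| ≤ H * Real.sqrt (∫ y, (ι f y) ^ 2 ∂μ))
    (cr : InnerProductSpace.Core ℝ F)
    (hcr : ∀ f g : F, cr.inner f g = ∫ x, ι f x * ι g x ∂μ) :
    ∃ (E : Type) (_ : NormedAddCommGroup E) (_ : InnerProductSpace ℝ E)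
      (_ : FiniteDimensional ℝ E) (κ : Ω → E),
      Module.finrank ℝ E = N ∧ (∀ x, ‖κ x‖ ≤ H) ∧
      (∀ v, Measurable fun x => (inner ℝ v (κ x) : ℝ)) ∧
      (∀ v, ∫ x, (inner ℝ v (κ x)) ^ 2 ∂μ = ‖v‖ ^ 2) ∧
      (∀ f : F, ∃ v : E, ∀ x, (inner ℝ v (κ x) : ℝ) = ι f x) := by
  let i1 : NormedAddCommGroup F := cr.toNormedAddCommGroup
  let i2 : InnerProductSpace ℝ F := InnerProductSpace.ofCore cr.toCore
  have hin : ∀ f g : F, (inner ℝ f g : ℝ) = ∫ x, ι f x * ι g x ∂μ := hcr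
  let ev : Ω → F →ₗ[ℝ] ℝ := fun x => (LinearMap.proj x).comp ι
  let κ : Ω → F := fun x => (InnerProductSpace.toDual ℝ F).symm (LinearMap.toContinuousLinearMap (ev x))
  have hκ : ∀ (f : F) x, (inner ℝ f (κ x) : ℝ) = ι f x := by
    intro f x
    rw [real_inner_comm, InnerProductSpace.toDual_symm_apply]
    rfl
  have hnorm : ∀ f : F, ∫ x, (ι f x) ^ 2 ∂μ = ‖f‖ ^ 2 := by
    intro f
    rw [← real_inner_self_eq_norm_sq, hin]
    congr 1; ext y; ring
  refine ⟨F, i1, i2, this, κ, hfin, ?_, ?_, ?_, ?_⟩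
  · intro x
    have h1 := hNI (κ x) x
    rw [← hκ, hnorm, Real.sqrt_sq (norm_nonneg _), real_inner_self_eq_norm_sq,
      abs_of_nonneg (by positivity)] at h1
    by_contra hlt
    push Not at hlt
    nlinarith
  · intro v
    simp only [hκ]
    exact (hc v).measurable
  · intro v
    simp only [hκ]
    exact hnorm v
  · intro f
    exact ⟨f, fun x => hκ _ x⟩

theorem rep_space (Ω : Type) [MetricSpace Ω] [CompactSpace Ω] [MeasurableSpace Ω] [BorelSpace Ω]
    (μ : Measure Ω) [IsProbabilityMeasure μ] (N : ℕ) (hN : 1 ≤ N) (H : ℝ) (hH : 1 ≤ H)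
    (X : Submodule ℝ (Ω → ℝ)) (hc : ∀ f ∈ X, Continuous f)
    (hfin : Module.finrank ℝ X = N)
    (hNI : ∀ f ∈ X, ∀ x, |f x| ≤ H * Real.sqrt (∫ y, (f y) ^ 2 ∂μ)) :
    ∃ (E : Type) (_ : NormedAddCommGroup E) (_ : InnerProductSpace ℝ E)
      (_ : FiniteDimensional ℝ E) (κ : Ω → E),
      Module.finrank ℝ E = N ∧ (∀ x, ‖κ x‖ ≤ H) ∧
      (∀ v, Measurable fun x => (inner ℝ v (κ x) : ℝ)) ∧
      (∀ v, ∫ x, (inner ℝ v (κ x)) ^ 2 ∂μ = ‖v‖ ^ 2) ∧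
      (∀ f ∈ X, ∃ v : E, ∀ x, (inner ℝ v (κ x) : ℝ) = f x) := by
  have : FiniteDimensional ℝ X := Module.finite_of_finrank_pos (by omega)
  have hintg : ∀ f ∈ X, ∀ g ∈ X, Integrable (fun x => f x * g x) μ := by
    intro f hf g hg
    exact ((hc f hf).mul (hc g hg)).integrable_of_hasCompactSupport
      (HasCompactSupport.of_compactSpace _)
  let cr : InnerProductSpace.Core ℝ X :=
    { inner := fun f g => ∫ x, (f : Ω → ℝ) x * (g : Ω → ℝ) x ∂μ
      conj_inner_symm := fun f g => by
        simp only [conj_trivial]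
        congr 1; ext x; ring
      re_inner_nonneg := fun f => by
        simp only [RCLike.re_to_real]
        exact integral_nonneg fun x => mul_self_nonneg _
      add_left := fun f g h => by
        rw [← integral_add (hintg _ f.2 _ h.2) (hintg _ g.2 _ h.2)]
        congr 1; ext x; simp [add_mul]
      smul_left := fun f g r => by
        simp only [conj_trivial]
        rw [← integral_const_mul]
        congr 1; ext x; simp [mul_assoc]
      definite := fun f h => by
        ext x
        have h1 := hNI f f.2 x
        have h2 : ∫ y, ((f : Ω → ℝ) y) ^ 2 ∂μ = 0 := by
          rw [← h]; congr 1; ext y; ring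
        rw [h2] at h1
        simpa using h1 }
  obtain ⟨E, i1, i2, i3, κ, h1, h2, h3, h4, h5⟩ := rep_space_aux Ω μ N H hH X X.subtype
    (fun f => hc f f.2) hfin this (fun f => hNI f f.2) cr (fun _ _ => rfl)
  exact ⟨E, i1, i2, i3, κ, h1, h2, h3, h4, fun f hf => h5 ⟨f, hf⟩⟩

open MeasureTheory

structure MP (Φ Ψ : ℝ → ℝ) (a A b T : ℝ) (q : ℕ) (LΦ LΨ : ℝ → ℝ) : Prop where
  h1 : ∀ l, 0 < l → LΨ l ≤ Ψ T + b * LΦ l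
  h2 : ∀ l, 0 < l → LΦ l ≤ Φ T + LΨ l
  h3 : ∀ l c, 0 < l → 1 ≤ c → LΨ (l * (A * c)) ≤ LΨ l / c
  h4 : ∀ l c, 0 < l → 1 ≤ c → LΦ (l * (a * c)) ≤ LΦ l / c
  h5 : ∀ l, 0 < l → LΨ l ≤ 2 ^ q * LΨ (2 * l)
  h6 : ∀ l l', 0 < l → l ≤ l' → LΨ l' ≤ LΨ l

theorem mp_of_aff (Φ Ψ : ℝ → ℝ) (p a A b T : ℝ) (q : ℕ) (hR : Reg Ψ p A q)
    (hmono : MonotoneOn Φ (Set.Ici 0)) (hnn : ∀ t, 0 ≤ t → 0 ≤ Φ t) (h0 : Φ 0 = 0)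
    (ha : 1 ≤ a) (hb : 1 ≤ b) (hT : 1 ≤ T)
    (hinc : ∀ s t, 0 < s → s < t → Φ s / s ^ (1 : ℝ) ≤ a * (Φ t / t ^ (1 : ℝ)))
    (hle : ∀ t, T ≤ t → Φ t ≤ Ψ t) (hge : ∀ t, T ≤ t → Ψ t ≤ b * Φ t)
    (L : (ℝ → ℝ) → ℝ → ℝ)
    (hL : ∀ u v : ℝ → ℝ, (u = Φ ∨ u = Ψ) → (v = Φ ∨ v = Ψ) → ∀ α β l l' : ℝ, 0 < l → 0 < l' →
      (∀ s, 0 ≤ s → u (s / l) ≤ α + β * v (s / l')) → L u l ≤ α + β * L v l') :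
    MP Φ Ψ a A b T q (L Φ) (L Ψ) := by
  have hA := hR.hA
  have hlin : ∀ t c, 0 ≤ t → 1 ≤ c → Φ (t / (a * c)) ≤ Φ t / c := by
    intro t c ht hc
    have hac : 1 ≤ a * c := by nlinarith
    rcases ht.eq_or_lt with rfl | ht
    · simp [h0]
    rcases hac.eq_or_lt with h | h
    · have : c = 1 := by nlinarith
      rw [← h, this, div_one, div_one]
    · have hlt : t / (a * c) < t := div_lt_self ht h
      have hpos : 0 < t / (a * c) := by positivity
      have := hinc _ _ hpos hlt
      rw [Real.rpow_one, Real.rpow_one, div_le_iff₀ hpos] at this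
      refine this.trans (le_of_eq ?_)
      field_simp
  refine ⟨?_, ?_, ?_, ?_, ?_, ?_⟩
  · intro l hl
    refine hL Ψ Φ (.inr rfl) (.inl rfl) _ _ l l hl hl fun s hs => ?_
    have hsl : 0 ≤ s / l := by positivity
    rcases le_total T (s / l) with h | h
    · have := hge _ h
      have := hR.nonneg T (by linarith)
      linarith
    · have := hR.mono hsl (by linarith : (0:ℝ) ≤ T) h
      have := hnn _ hsl
      nlinarith
  · intro l hl
    have := hL Φ Ψ (.inl rfl) (.inr rfl) (Φ T) 1 l l hl hl fun s hs => ?_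
    · linarith
    have hsl : 0 ≤ s / l := by positivity
    rcases le_total T (s / l) with h | h
    · have := hle _ h
      have := hnn T (by linarith)
      linarith
    · have := hmono hsl (by simp; linarith : T ∈ Set.Ici (0:ℝ)) h
      have := hR.nonneg _ hsl
      linarith
  · intro l c hl hc
    have := hL Ψ Ψ (.inr rfl) (.inr rfl) 0 (1 / c) (l * (A * c)) l (by positivity) hl fun s hs => ?_
    · rw [div_eq_mul_one_div]; linarith
    have h := hR.scale (s / l) c (by positivity) hc
    rw [div_div] at h
    rw [zero_add, one_div, inv_mul_eq_div]; exact h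
  · intro l c hl hc
    have := hL Φ Φ (.inl rfl) (.inl rfl) 0 (1 / c) (l * (a * c)) l (by positivity) hl fun s hs => ?_
    · rw [div_eq_mul_one_div]; linarith
    have h := hlin (s / l) c (by positivity) hc
    rw [div_div] at h
    rw [zero_add, one_div, inv_mul_eq_div]; exact h
  · intro l hl
    have := hL Ψ Ψ (.inr rfl) (.inr rfl) 0 (2 ^ q) l (2 * l) hl (by positivity) fun s hs => ?_
    · linarith
    rcases hs.eq_or_lt with rfl | hs
    · simp [hR.zero]
    have hs2 : 0 < s / (2 * l) := by positivity
    have e : s / l = 2 * (s / (2 * l)) := by field_simp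
    rw [e]
    have := hR.dec (s / (2 * l)) (2 * (s / (2 * l))) hs2 (by linarith)
    rw [mul_pow, ← mul_assoc] at this
    have := le_of_mul_le_mul_right this (by positivity)
    linarith
  · intro l l' hl hll
    have := hL Ψ Ψ (.inr rfl) (.inr rfl) 0 1 l' l (by linarith) hl fun s hs => ?_
    · linarith
    have hl' : 0 < l' := by linarith
    have := hR.mono (show 0 ≤ s / l' by positivity) (show 0 ≤ s / l by positivity)
      (show s / l' ≤ s / l by gcongr)
    linarith

theorem MP.nonempty {Φ Ψ : ℝ → ℝ} {a A b T : ℝ} {q : ℕ} {LΦ LΨ : ℝ → ℝ}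
    (h : MP Φ Ψ a A b T q LΦ LΨ) (ha : 1 ≤ a) : ∃ l, 0 < l ∧ LΦ l ≤ 1 := by
  have hc := le_max_left 1 (LΦ 1)
  refine ⟨1 * (a * max 1 (LΦ 1)), by positivity, (h.h4 1 _ one_pos hc).trans ?_⟩
  rw [div_le_one (by positivity)]
  exact le_max_right _ _

theorem MP.upper {Φ Ψ : ℝ → ℝ} {a A b T : ℝ} {q : ℕ} {LΦ LΨ LΦ' LΨ' : ℝ → ℝ}
    (h : MP Φ Ψ a A b T q LΦ LΨ) (h' : MP Φ Ψ a A b T q LΦ' LΨ') (ha : 1 ≤ a) (hA : 1 ≤ A)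
    (hb : 1 ≤ b) (hΦT : 0 ≤ Φ T) (hcore : ∀ l, 0 < l → LΨ l ≤ 1 → |LΨ' l - LΨ l| ≤ 1)
    (l : ℝ) (hl : 0 < l) (hl1 : LΦ l ≤ 1) :
    LΦ' (l * (A * max 1 (Ψ T + b)) * (a * (Φ T + 2))) ≤ 1 := by
  set K := max 1 (Ψ T + b) with hK
  have hK1 : 1 ≤ K := le_max_left _ _
  have hK2 : Ψ T + b ≤ K := le_max_right _ _
  have e1 : LΨ l ≤ K := by
    have := h.h1 l hl
    nlinarith
  have e2 : LΨ (l * (A * K)) ≤ 1 := by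
    refine (h.h3 l K hl hK1).trans ?_
    rwa [div_le_one (by linarith)]
  have hl2 : 0 < l * (A * K) := by positivity
  have e3 := (abs_le.mp (hcore _ hl2 e2)).2
  have e4 := h'.h2 _ hl2
  refine (h'.h4 _ (Φ T + 2) hl2 (by linarith)).trans ?_
  rw [div_le_one (by linarith)]
  linarith

theorem MP.lower {Φ Ψ : ℝ → ℝ} {a A b T : ℝ} {q : ℕ} {LΦ LΨ LΦ' LΨ' : ℝ → ℝ}
    (h : MP Φ Ψ a A b T q LΦ LΨ) (h' : MP Φ Ψ a A b T q LΦ' LΨ') (ha : 1 ≤ a) (hA : 1 ≤ A)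
    (hb : 1 ≤ b) (hΦT : 0 ≤ Φ T)
    (hcore : ∀ l, 0 < l → LΨ l ≤ 1 → |LΨ' l - LΨ l| ≤ 1 / 2 ^ (q + 1))
    (l : ℝ) (hl : 0 < l) (hl1 : LΦ' l ≤ 1) :
    LΦ (l * (A * (max 1 (Ψ T + b) * 2 ^ (q + 2))) * (a * (Φ T + 1))) ≤ 1 := by
  set K := max 1 (Ψ T + b) with hK
  have hK1 : 1 ≤ K := le_max_left _ _
  have hK2 : Ψ T + b ≤ K := le_max_right _ _
  have e1 : LΨ' l ≤ K := by
    have := h'.h1 l hl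
    nlinarith
  have h2q : (1 : ℝ) ≤ 2 ^ (q + 2) := one_le_pow₀ (by norm_num)
  set l1 := l * (A * (K * 2 ^ (q + 2))) with hl1d
  have hl10 : 0 < l1 := by positivity
  have e2 : LΨ' l1 ≤ 1 / 2 ^ (q + 2) := by
    refine (h'.h3 l (K * 2 ^ (q + 2)) hl (by nlinarith)).trans ?_
    rw [← div_div]
    gcongr
    rwa [div_le_one (by linarith)]
  have e3 : LΨ l1 ≤ 1 := by
    by_contra hlt
    push Not at hlt
    have hex : ∃ j : ℕ, LΨ (2 ^ j * l1) ≤ 1 := by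
      obtain ⟨j, hj⟩ := pow_unbounded_of_one_lt (A * LΨ l1) (by norm_num : (1:ℝ) < 2)
      refine ⟨j, (h.h6 (l1 * (A * LΨ l1)) _ (by positivity) (by nlinarith)).trans ?_⟩
      refine (h.h3 l1 _ hl10 hlt.le).trans ?_
      rw [div_self (by linarith)]
    classical
    have hj := Nat.find_spec hex
    have hmin := fun k => Nat.find_min (m := k) hex
    set j := Nat.find hex
    rcases Nat.eq_zero_or_pos j with h0 | hpos
    · rw [h0] at hj; simp at hj; linarith
    obtain ⟨k, hk⟩ : ∃ k, j = k + 1 := ⟨j - 1, by omega⟩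
    have e5 := hmin k (by omega)
    push Not at e5
    have e6 := h.h5 (2 ^ k * l1) (by positivity)
    have e66 : 2 * (2 ^ k * l1) = 2 ^ j * l1 := by rw [hk, pow_succ]; ring
    rw [e66] at e6
    have e7 := (abs_le.mp (hcore _ (by positivity) hj)).1
    have e8 := h'.h6 l1 (2 ^ j * l1) hl10 (by
      have : (1:ℝ) ≤ 2 ^ j := one_le_pow₀ (by norm_num)
      nlinarith)
    have e9 : (1:ℝ) / 2 ^ q < LΨ (2 ^ j * l1) := by
      rw [div_lt_iff₀ (by positivity)]; linarith
    have e10 : (1:ℝ) / 2 ^ (q + 1) = 1 / 2 ^ q / 2 := by rw [pow_succ, div_div]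
    have e11 : (1:ℝ) / 2 ^ (q + 2) = 1 / 2 ^ q / 4 := by rw [pow_add, div_div]; norm_num
    have e12 : (0:ℝ) < 1 / 2 ^ q := by positivity
    linarith
  have e4 := h.h2 _ hl10
  refine (h.h4 _ (Φ T + 1) hl10 (by linarith)).trans ?_
  rw [div_le_one (by linarith)]
  linarith

theorem aff_int (Ω : Type) [MeasurableSpace Ω] (μ : Measure Ω) [IsProbabilityMeasure μ]
    (f : Ω → ℝ) (hf : Measurable f) (B : ℝ) (hB : ∀ x, |f x| ≤ B) (u v : ℝ → ℝ)
    (hu : MonotoneOn u (Set.Ici 0)) (hv : MonotoneOn v (Set.Ici 0))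
    (α β l l' : ℝ) (hl : 0 < l) (hl' : 0 < l')
    (h : ∀ s, 0 ≤ s → u (s / l) ≤ α + β * v (s / l')) :
    ∫ x, u (|f x| / l) ∂μ ≤ α + β * ∫ x, v (|f x| / l') ∂μ := by
  have key : ∀ (w : ℝ → ℝ) (r : ℝ), MonotoneOn w (Set.Ici 0) → 0 < r →
      Integrable (fun x => w (|f x| / r)) μ := by
    intro w r hw hr
    have hm : Monotone fun t => w (max t 0) := fun s t hst =>
      hw (by simp) (by simp) (max_le_max hst le_rfl)
    have e : (fun x => w (|f x| / r)) = fun x => (fun t => w (max t 0)) (|f x| / r) := by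
      ext x
      have : 0 ≤ |f x| / r := by positivity
      simp [max_eq_left this]
    refine Integrable.of_bound (C := max |w 0| |w (B / r)|) ?_ ?_
    · rw [e]
      exact (hm.measurable.comp (by fun_prop)).aestronglyMeasurable
    · refine Filter.Eventually.of_forall fun x => ?_
      have h0 : 0 ≤ |f x| / r := by positivity
      have h1 : |f x| / r ≤ B / r := by gcongr; exact hB x
      rw [Real.norm_eq_abs]
      exact abs_le_max_abs_abs (hw (by simp) h0 h0) (hw h0 (h0.trans h1) h1)
  have hv' := key v l' hv hl'
  calc ∫ x, u (|f x| / l) ∂μ ≤ ∫ x, (α + β * v (|f x| / l')) ∂μ :=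
        integral_mono (key u l hu hl) ((integrable_const _).add (hv'.const_mul _))
          fun x => h _ (abs_nonneg _)
    _ = _ := by
        rw [integral_add (integrable_const _) (hv'.const_mul _), integral_const_mul]
        simp

theorem aff_sum (Ω : Type) (m : ℕ) (hm : 1 ≤ m) (x : Fin m → Ω)
    (f : Ω → ℝ) (u v : ℝ → ℝ) (α β l l' : ℝ)
    (h : ∀ s, 0 ≤ s → u (s / l) ≤ α + β * v (s / l')) :
    (∑ j, u (|f (x j)| / l)) / (m : ℝ) ≤ α + β * ((∑ j, v (|f (x j)| / l')) / (m : ℝ)) := by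
  have hm' : (0 : ℝ) < m := by exact_mod_cast hm
  rw [div_le_iff₀ hm']
  calc ∑ j, u (|f (x j)| / l) ≤ ∑ j, (α + β * v (|f (x j)| / l')) :=
        Finset.sum_le_sum fun j _ => h _ (abs_nonneg _)
    _ = _ := by
        rw [Finset.sum_add_distrib, ← Finset.mul_sum]
        simp
        field_simp

theorem inc_conv (Φ : ℝ → ℝ) (hnn : ∀ t, 0 ≤ t → 0 ≤ Φ t) (p p' a t1 T : ℝ) (hp : p' ≤ p)
    (ha : 1 ≤ a) (hT : 1 ≤ T) (h1 : t1 < T) (h : AIncPOn Φ p a t1) (s t : ℝ) (hs : T ≤ s)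
    (hst : s ≤ t) : Φ s * t ^ p' ≤ a * Φ t * s ^ p' := by
  have hs0 : 0 < s := by linarith
  have ht0 : 0 < t := by linarith
  have hΦt := hnn t ht0.le
  rcases hst.eq_or_lt with rfl | hlt
  · have : 0 < s ^ p' := Real.rpow_pos_of_pos hs0 _
    gcongr
    nlinarith
  have h2 := h s t (by linarith) hlt
  have e1 : s ^ p = s ^ p' * s ^ (p - p') := by rw [← Real.rpow_add hs0]; congr 1; ring
  have e2 : t ^ p = t ^ p' * t ^ (p - p') := by rw [← Real.rpow_add ht0]; congr 1; ring
  have e3 : s ^ (p - p') ≤ t ^ (p - p') := Real.rpow_le_rpow hs0.le hst (by linarith)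
  have p1 : 0 < s ^ p' := Real.rpow_pos_of_pos hs0 _
  have p2 : 0 < s ^ (p - p') := Real.rpow_pos_of_pos hs0 _
  have p3 : 0 < t ^ p' := Real.rpow_pos_of_pos ht0 _
  have p4 : 0 < t ^ (p - p') := Real.rpow_pos_of_pos ht0 _
  rw [e1, e2, ← mul_div_assoc, div_le_div_iff₀ (by positivity) (by positivity)] at h2
  have h3 : Φ s * t ^ p' * t ^ (p - p') ≤ a * Φ t * s ^ p' * t ^ (p - p') := by
    calc Φ s * t ^ p' * t ^ (p - p') ≤ a * Φ t * s ^ p' * s ^ (p - p') := by linarith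
      _ ≤ _ := by gcongr
  exact le_of_mul_le_mul_right h3 p4

theorem dec_conv (Φ : ℝ → ℝ) (hnn : ∀ t, 0 ≤ t → 0 ≤ Φ t) (q' b t1 T : ℝ) (q : ℕ) (hq : q' ≤ q)
    (hb : 1 ≤ b) (hT : 1 ≤ T) (h1 : t1 < T) (h : ADecQOn Φ q' b t1) (s t : ℝ) (hs : T ≤ s)
    (hst : s ≤ t) : Φ t * s ^ q ≤ b * Φ s * t ^ q := by
  have hs0 : 0 < s := by linarith
  have ht0 : 0 < t := by linarith
  have hΦt := hnn t ht0.le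
  have hΦs := hnn s hs0.le
  rcases hst.eq_or_lt with rfl | hlt
  · gcongr
    nlinarith
  have h2 := h s t (by linarith) hlt
  have e1 : s ^ q = s ^ q' * s ^ ((q : ℝ) - q') := by
    rw [← Real.rpow_add hs0, ← Real.rpow_natCast]; congr 1; ring
  have e2 : t ^ q = t ^ q' * t ^ ((q : ℝ) - q') := by
    rw [← Real.rpow_add ht0, ← Real.rpow_natCast]; congr 1; ring
  have e3 : s ^ ((q : ℝ) - q') ≤ t ^ ((q : ℝ) - q') := Real.rpow_le_rpow hs0.le hst (by linarith)
  have p1 : 0 < s ^ q' := Real.rpow_pos_of_pos hs0 _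
  have p2 : 0 < s ^ ((q : ℝ) - q') := Real.rpow_pos_of_pos hs0 _
  have p3 : 0 < t ^ q' := Real.rpow_pos_of_pos ht0 _
  rw [← mul_div_assoc, div_le_div_iff₀ (by positivity) (by positivity)] at h2
  rw [e1, e2]
  calc Φ t * (s ^ q' * s ^ ((q : ℝ) - q')) = (Φ t * s ^ q') * s ^ ((q : ℝ) - q') := by ring
    _ ≤ (b * Φ s * t ^ q') * t ^ ((q : ℝ) - q') := by gcongr
    _ = _ := by ring

theorem sInf_transfer (P Q : ℝ → Prop) (C : ℝ) (hC : 0 < C) (hne : ∃ l, 0 < l ∧ P l)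
    (h : ∀ l, 0 < l → P l → Q (l * C)) :
    sInf {l : ℝ | 0 < l ∧ Q l} ≤ C * sInf {l : ℝ | 0 < l ∧ P l} := by
  rw [mul_comm, ← div_le_iff₀ hC]
  refine le_csInf hne ?_
  rintro l ⟨hl, hP⟩
  rw [div_le_iff₀ hC]
  exact csInf_le ⟨0, fun y hy => hy.1.le⟩ ⟨by positivity, h l hl hP⟩

/-- Theorem cor4.2. Let `p ∈ (1,∞)`. For every Φ-function `Φ` with
`Φ ∈ (aInc)_p(∞) ∩ (aDec)(∞)` there exist positive constants `c, C, C₁, C₂` (depending only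
on `Φ` and `p`) such that for every `N`-dimensional subspace `X_N ∈ NI_{2,∞}(H)` and every
`m ≥ C Φ(c H^{2/min{p,2}}) (log₂ 2N)² log₂ 2H²`, there are points `x₁,…,x_m ∈ Ω` with
`C₁ ‖f‖_Φ ≤ ‖f‖_{Φ,x} ≤ C₂ ‖f‖_Φ` for all `f ∈ X_N`. -/
theorem statement11 (p : ℝ) (hp : 1 < p)
    (Φ : ℝ → ℝ) (hpre : IsPhiPrefun Φ) (hphiw : ∃ a : ℝ, 1 ≤ a ∧ AIncP Φ 1 a)
    (hainc : ∃ tstar a : ℝ, 0 ≤ tstar ∧ 1 ≤ a ∧ AIncPOn Φ p a tstar)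
    (hadec : ∃ q tstar b : ℝ, 1 ≤ q ∧ 0 ≤ tstar ∧ 1 ≤ b ∧ ADecQOn Φ q b tstar) :
    ∃ c C C₁ C₂ : ℝ, 0 < c ∧ 0 < C ∧ 0 < C₁ ∧ 0 < C₂ ∧
      ∀ (Ω : Type) [MetricSpace Ω] [CompactSpace Ω] [MeasurableSpace Ω] [BorelSpace Ω],
      ∀ (μ : Measure Ω), IsProbabilityMeasure μ →
      ∀ N : ℕ, 1 ≤ N → ∀ H : ℝ, 1 ≤ H →
      ∀ X : Submodule ℝ (Ω → ℝ),
        (∀ f ∈ X, Continuous f) →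
        Module.finrank ℝ X = N →
        (∀ f ∈ X, supNorm f ≤ H * Real.sqrt (∫ y, (f y) ^ 2 ∂μ)) →
      ∀ m : ℕ,
        C * Φ (c * H ^ (2 / min p 2)) * (Real.logb 2 (2 * N)) ^ 2 *
            Real.logb 2 (2 * H ^ 2) ≤ (m : ℝ) →
        ∃ x : Fin m → Ω, ∀ f ∈ X,
          C₁ * luxNorm μ Φ f ≤ discLuxNorm Φ x f ∧
          discLuxNorm Φ x f ≤ C₂ * luxNorm μ Φ f := by
  obtain ⟨a, ha, hinc1⟩ := hphiw
  obtain ⟨t1, a1, -, ha1, hincp⟩ := hainc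
  obtain ⟨q0, t2, b, hq0, -, hb, hdecq⟩ := hadec
  set p' := min p 2 with hp'
  have hp'1 : 1 < p' := lt_min hp (by norm_num)
  have hp'2 : p' ≤ 2 := min_le_right _ _
  have hp'0 : 0 < p' := by linarith
  set q : ℕ := max 2 ⌈q0⌉₊ with hq
  have hq2 : 2 ≤ q := le_max_left _ _
  have hqq : q0 ≤ q := (Nat.le_ceil q0).trans (by exact_mod_cast le_max_right _ _)
  obtain ⟨T, hT, hT1, hT2, hΦT⟩ : ∃ T, 1 ≤ T ∧ t1 < T ∧ t2 < T ∧ 0 < Φ T := by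
    have e := (hpre.tendsto_atTop.eventually_gt_atTop 0).and
      ((Filter.eventually_ge_atTop (1 : ℝ)).and
        ((Filter.eventually_gt_atTop t1).and (Filter.eventually_gt_atTop t2)))
    obtain ⟨T, h1, h2, h3, h4⟩ := e.exists
    exact ⟨T, h2, h3, h4, h1⟩
  obtain ⟨Ψ, hR, hle, hge⟩ := exists_reg Φ p' a1 b T q hp'1 hp'2 hq2 ha1 hb hT hpre.mono
    hpre.nonneg hΦT
    (inc_conv Φ hpre.nonneg p p' a1 t1 T (min_le_left _ _) ha1 hT hT1 hincp)
    (dec_conv Φ hpre.nonneg q0 b t2 T q hqq hb hT hT2 hdecq)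
  set A := a1 * b with hA
  have hA1 : 1 ≤ A := hR.hA
  have hΨ1 := hR.one
  set K0 : ℝ := 1 + A / Ψ 1 with hK0
  have hK00 : 0 < K0 := by positivity
  have hτ : (1 : ℝ) / 2 ^ (q + 1) ≤ 1 / 2 := by
    have : (1:ℝ) ≤ 2 ^ q := one_le_pow₀ (by norm_num)
    rw [pow_succ]
    gcongr
    linarith
  obtain ⟨C0, hC0, hcore⟩ := core hR K0 (1 / 2 ^ (q + 1)) hK0 (by positivity) hτ
  set K := max 1 (Ψ T + b) with hK
  have hK1 : 1 ≤ K := le_max_left _ _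
  set c := max (K0 ^ (1 / p')) T with hc
  have hcT : T ≤ c := le_max_right _ _
  set Cu := (A * K) * (a * (Φ T + 2)) with hCu
  set Cl := (A * (K * 2 ^ (q + 2))) * (a * (Φ T + 1)) with hCl
  have hCu0 : 0 < Cu := by positivity
  have hCl0 : 0 < Cl := by positivity
  refine ⟨c, C0 * b, 1 / Cl, Cu, by linarith, by positivity, by positivity, hCu0, ?_⟩
  intro Ω _ _ _ _ μ _ N hN H hH X hXc hfin hNI m hm
  have hbd : ∀ f ∈ X, BddAbove (Set.range fun x => |f x|) := fun f hf =>
    (isCompact_range (hXc f hf).abs).bddAbove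
  have hNI' : ∀ f ∈ X, ∀ x, |f x| ≤ H * Real.sqrt (∫ y, (f y) ^ 2 ∂μ) := fun f hf x =>
    (le_ciSup (hbd f hf) x).trans (hNI f hf)
  obtain ⟨E, i1, i2, i3, κ, hE, hκ, hκm, hκ2, hrep⟩ :=
    rep_space Ω μ N hN H hH X hXc hfin hNI'
  -- numerical threshold
  have hHp : 1 ≤ H ^ (2 / p') := Real.one_le_rpow hH (by positivity)
  set M := K0 ^ (1 / p') * H ^ (2 / p') with hM
  have hM0 : 0 < M := by
    have := Real.rpow_pos_of_pos hK00 (1 / p')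
    positivity
  have hMp : M ^ p' = K0 * H ^ 2 := by
    rw [hM, Real.mul_rpow (by positivity) (by positivity), ← Real.rpow_mul hK00.le,
      ← Real.rpow_mul (by linarith), one_div_mul_cancel hp'0.ne', div_mul_cancel₀ _ hp'0.ne',
      Real.rpow_one, Real.rpow_two]
  have hcH : T ≤ c * H ^ (2 / p') := by nlinarith
  have hΨM : Ψ M ≤ b * Φ (c * H ^ (2 / p')) := by
    refine le_trans (hR.mono hM0.le (show (0:ℝ) ≤ c * H ^ (2 / p') by linarith) ?_) (hge _ hcH)
    rw [hM]
    gcongr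
    exact le_max_left _ _
  have hlogN : 1 ≤ Real.logb 2 (2 * N) := by
    rw [Real.le_logb_iff_rpow_le (by norm_num) (by positivity), Real.rpow_one]
    have : (1 : ℝ) ≤ N := by exact_mod_cast hN
    linarith
  have hlogH : 1 ≤ Real.logb 2 (2 * H ^ 2) := by
    rw [Real.le_logb_iff_rpow_le (by norm_num) (by positivity), Real.rpow_one]
    nlinarith
  have hΦc : 0 < Φ (c * H ^ (2 / p')) :=
    hΦT.trans_le (hpre.mono (show (0:ℝ) ≤ T by linarith)
      (show (0:ℝ) ≤ c * H ^ (2 / p') by linarith) hcH)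
  have hm1 : 1 ≤ m := by
    have : (0 : ℝ) < m := lt_of_lt_of_le (by positivity) hm
    exact_mod_cast this
  have hm2 : C0 * Ψ M * (Real.logb 2 (2 * N)) ^ 2 * Real.logb 2 (2 * H ^ 2) ≤ m := by
    refine le_trans ?_ hm
    have : C0 * Ψ M ≤ C0 * b * Φ (c * H ^ (2 / p')) := by
      rw [mul_assoc]
      gcongr
    gcongr
  obtain ⟨x, hx⟩ := hcore Ω E μ κ H M N hN hE hH hM0 hMp hκ hκm hκ2 m hm1 hm2
  refine ⟨x, fun f hf => ?_⟩
  obtain ⟨v, hv⟩ := hrep f hf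
  obtain ⟨B, hB⟩ := hbd f hf
  have hB' : ∀ x, |f x| ≤ B := fun x => hB ⟨x, rfl⟩
  have hmn : ∀ u : ℝ → ℝ, (u = Φ ∨ u = Ψ) → MonotoneOn u (Set.Ici 0) := by
    rintro u (rfl | rfl)
    · exact hpre.mono
    · exact hR.mono
  have mp1 := mp_of_aff Φ Ψ p' a A b T q hR hpre.mono hpre.nonneg hpre.map_zero ha hb hT hinc1
    hle hge (fun u l => ∫ y, u (|f y| / l) ∂μ)
    (fun u w hu hw α β l l' hl hl' h => aff_int Ω μ f (hXc f hf).measurable B hB' u w (hmn u hu)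
      (hmn w hw) α β l l' hl hl' h)
  have mp2 := mp_of_aff Φ Ψ p' a A b T q hR hpre.mono hpre.nonneg hpre.map_zero ha hb hT hinc1
    hle hge (fun u l => (∑ j, u (|f (x j)| / l)) / (m : ℝ))
    (fun u w _ _ α β l l' _ _ h => aff_sum Ω m hm1 x f u w α β l l' h)
  have hcr : ∀ l : ℝ, 0 < l → ∫ y, Ψ (|f y| / l) ∂μ ≤ 1 →
      |(∑ j, Ψ (|f (x j)| / l)) / (m : ℝ) - ∫ y, Ψ (|f y| / l) ∂μ| ≤ 1 / 2 ^ (q + 1) := by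
    intro l hl h
    have e : ∀ y, |(inner ℝ (l⁻¹ • v) (κ y) : ℝ)| = |f y| / l := by
      intro y
      rw [real_inner_smul_left, hv, abs_mul, abs_of_pos (inv_pos.mpr hl), inv_mul_eq_div]
    have := hx (l⁻¹ • v)
    simp only [e] at this
    exact this h
  constructor
  · rw [one_div, inv_mul_le_iff₀ hCl0]
    refine sInf_transfer _ _ Cl hCl0 (mp2.nonempty ha) fun l hl h => ?_
    have := mp1.lower mp2 ha hA1 hb hΦT.le hcr l hl h
    rw [hCl, ← mul_assoc]
    exact this
  · refine sInf_transfer _ _ Cu hCu0 (mp1.nonempty ha) fun l hl h => ?_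
    have := mp1.upper mp2 ha hA1 hb hΦT.le
      (fun l hl h => (hcr l hl h).trans (by linarith)) l hl h
    rw [hCu, ← mul_assoc]
    exact this
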